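/- arXiv:0710.4234 — 7 statements merged into one kernel-verified Lean document; each statement's English description precedes it below -/
import Mathlib

section
/- Suppose: (i) the model is parameter uniformly relevant (PUR): there exist d, k > 0 such that for all |θ| > k, sgn(θ)·(∫_ℝ x·π(x | θ) dx − y) ≥ d; (ii) the centred parametrisation is geometrically tight in parameter (GTIP): there exist a, b > 0 such that for every θ ∈ ℝ and every t ≥ 0, ∫_{{x : |x| > t}} π(x | θ) dx ≤ a·e^{−b·t}. Then, writing x̃ = x − θ for the non-centred missing datum (so that y − x̃ = y − x + θ), there exists α₀ > 0 such that for every α ∈ (0, α₀): for all θ > k, ∫_ℝ e^{α(y − x + θ)} π(x | θ) dx ≤ e^{α θ}(1 − α d/2), and for all θ < −k, ∫_ℝ e^{−α(y − x + θ)} π(x | θ) dx ≤ e^{−α θ}(1 − α d/2). -/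
open MeasureTheory Filter Set

noncomputable section

/-- Joint (unnormalised posterior) density `f_θ(x) = f₁(y - x) · f₂(x - θ)`. -/
def fjoint (f₁ f₂ : ℝ → ℝ) (y θ x : ℝ) : ℝ := f₁ (y - x) * f₂ (x - θ)

/-- Normalising constant `c_θ = ∫ f_θ(x) dx`. -/
def cnorm (f₁ f₂ : ℝ → ℝ) (y θ : ℝ) : ℝ := ∫ x, fjoint f₁ f₂ y θ x

/-- Conditional posterior density `π(x | θ) = f_θ(x)/c_θ`. -/
def post (f₁ f₂ : ℝ → ℝ) (y θ x : ℝ) : ℝ := fjoint f₁ f₂ y θ x / cnorm f₁ f₂ y θ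

/-- One-step transition density of the marginal Θ-chain of the centred Gibbs sampler:
`p(θ₀, θ₁) = (1/c_{θ₀}) ∫ f₂(x - θ₁) f_{θ₀}(x) dx`. -/
def gibbsTrans (f₁ f₂ : ℝ → ℝ) (y θ₀ θ₁ : ℝ) : ℝ :=
  (1 / cnorm f₁ f₂ y θ₀) * ∫ x, f₂ (x - θ₁) * fjoint f₁ f₂ y θ₀ x

/-- `n`-step transition density (for `n ≥ 1`; the value at `n = 0` is unused). -/
def gibbsTransN (f₁ f₂ : ℝ → ℝ) (y : ℝ) : ℕ → ℝ → ℝ → ℝ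
  | 0, _, _ => 0
  | 1, θ₀, θ₁ => gibbsTrans f₁ f₂ y θ₀ θ₁
  | (n + 2), θ₀, θ₁ => ∫ u, gibbsTransN f₁ f₂ y (n + 1) θ₀ u * gibbsTrans f₁ f₂ y u θ₁

lemma aux_moment (μ : Measure ℝ) [IsProbabilityMeasure μ] (a b : ℝ) (ha : 0 < a) (hb : 0 < b)
    (ht : ∀ t : ℝ, 0 ≤ t → μ {x : ℝ | t < |x|} ≤ ENNReal.ofReal (a * Real.exp (-b * t))) :
    Integrable (fun x : ℝ => Real.exp (b / 2 * |x|)) μ ∧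
      ∫ x, Real.exp (b / 2 * |x|) ∂μ ≤ 1 + a := by
  have hlc := lintegral_comp_eq_lintegral_meas_lt_mul (f := fun x : ℝ => |x|)
    (g := fun t => b / 2 * Real.exp (b / 2 * t)) μ
    (Eventually.of_forall fun x => abs_nonneg x) (by fun_prop)
    (fun t _ => Continuous.intervalIntegrable (by fun_prop) _ _)
    (Eventually.of_forall fun x => by positivity)
  have hprim : ∀ u : ℝ, (∫ t in (0 : ℝ)..u, b / 2 * Real.exp (b / 2 * t))
      = Real.exp (b / 2 * u) - 1 := by
    intro u
    have h : ∀ t ∈ Set.uIcc 0 u, HasDerivAt (fun t => Real.exp (b / 2 * t))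
        (b / 2 * Real.exp (b / 2 * t)) t := by
      intro t _
      have := ((hasDerivAt_id t).const_mul (b / 2)).exp
      simpa [mul_comm] using this
    rw [intervalIntegral.integral_eq_sub_of_hasDerivAt h
      (Continuous.intervalIntegrable (by fun_prop) _ _)]
    simp
  simp only [hprim] at hlc
  have hR : (∫⁻ t in Ioi (0 : ℝ), μ {x : ℝ | t < |x|} *
      ENNReal.ofReal (b / 2 * Real.exp (b / 2 * t))) ≤ ENNReal.ofReal a := by
    calc _ ≤ ∫⁻ t in Ioi (0 : ℝ), ENNReal.ofReal (a * (b / 2) * Real.exp (-(b / 2) * t)) := by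
          refine setLIntegral_mono (by fun_prop) fun t h0 => ?_
          calc _ ≤ ENNReal.ofReal (a * Real.exp (-b * t)) *
                ENNReal.ofReal (b / 2 * Real.exp (b / 2 * t)) := by
                gcongr
                exact ht t (le_of_lt h0)
            _ = _ := by
                rw [← ENNReal.ofReal_mul (by positivity)]
                congr 1
                have : Real.exp (-(b / 2) * t) = Real.exp (-b * t) * Real.exp (b / 2 * t) := by
                  rw [← Real.exp_add]; congr 1; ring
                rw [this]; ring
      _ = ENNReal.ofReal (∫ t in Ioi (0 : ℝ), a * (b / 2) * Real.exp (-(b / 2) * t)) := by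
          rw [ofReal_integral_eq_lintegral_ofReal]
          · exact (integrableOn_exp_mul_Ioi (by linarith) 0).const_mul _
          · exact Eventually.of_forall fun x => by positivity
      _ = ENNReal.ofReal a := by
          rw [integral_const_mul, integral_exp_mul_Ioi (by linarith)]
          congr 1
          simp
          field_simp
  rw [← hlc] at hR
  have hnn : ∀ x : ℝ, 0 ≤ Real.exp (b / 2 * |x|) - 1 := by
    intro x
    have : 1 ≤ Real.exp (b / 2 * |x|) := Real.one_le_exp (by positivity)
    linarith
  have hint : Integrable (fun x : ℝ => Real.exp (b / 2 * |x|) - 1) μ := by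
    refine ⟨by fun_prop, ?_⟩
    rw [hasFiniteIntegral_iff_ofReal (Eventually.of_forall hnn)]
    exact lt_of_le_of_lt hR ENNReal.ofReal_lt_top
  have hint' : Integrable (fun x : ℝ => Real.exp (b / 2 * |x|)) μ := by
    refine (hint.add (integrable_const (1 : ℝ))).congr (Eventually.of_forall fun x => ?_)
    simp
  refine ⟨hint', ?_⟩
  have h1 : ∫ x, (Real.exp (b / 2 * |x|) - 1) ∂μ ≤ a := by
    rw [integral_eq_lintegral_of_nonneg_ae (Eventually.of_forall hnn) (by fun_prop)]
    exact ENNReal.toReal_le_of_le_ofReal ha.le hR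
  rw [integral_sub hint' (integrable_const _)] at h1
  simp at h1
  linarith

lemma aux_exp (u : ℝ) : Real.exp u ≤ 1 + u + |u| ^ 2 * Real.exp |u| := by
  have h := Complex.norm_exp_sub_sum_le_norm_mul_exp (u : ℂ) 2
  simp only [Finset.sum_range_succ, Finset.sum_range_zero] at h
  have e : (Complex.exp (u : ℂ) - (0 + (u : ℂ) ^ 0 / (Nat.factorial 0 : ℂ)
      + (u : ℂ) ^ 1 / (Nat.factorial 1 : ℂ))) = ((Real.exp u - (1 + u) : ℝ) : ℂ) := by
    push_cast; simp
  rw [e, Complex.norm_real, Complex.norm_real, Real.norm_eq_abs, Real.norm_eq_abs] at h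
  have := le_abs_self (Real.exp u - (1 + u))
  linarith

lemma aux_pt (b y α s x : ℝ) (hb : 0 < b) (hα : 0 < α) (hαb : α ≤ b / 4) (hs : |s| = 1) :
    Real.exp (α * s * (y - x)) ≤ 1 + α * s * (y - x) +
      α ^ 2 * (32 / b ^ 2 * Real.exp (b / 2 * |y|)) * Real.exp (b / 2 * |x|) := by
  have h := aux_exp (α * s * (y - x))
  have habs : |α * s * (y - x)| = α * |y - x| := by
    rw [abs_mul, abs_mul, hs, abs_of_pos hα, mul_one]
  rw [habs] at h
  set w := |y - x| with hw
  have hw0 : 0 ≤ w := abs_nonneg _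
  have h2 : w ^ 2 ≤ 32 / b ^ 2 * Real.exp (b / 4 * w) := by
    have := Real.pow_div_factorial_le_exp (x := b / 4 * w) (by positivity) 2
    simp [Nat.factorial] at this
    have h3 : w ^ 2 = 32 / b ^ 2 * ((b / 4 * w) ^ 2 / 2) := by field_simp; ring
    rw [h3]; gcongr
  have h3 : Real.exp (α * w) ≤ Real.exp (b / 4 * w) := by gcongr
  have h4 : w ≤ |y| + |x| := abs_sub y x
  have h5 : Real.exp (b / 4 * w) * Real.exp (b / 4 * w) ≤
      Real.exp (b / 2 * |y|) * Real.exp (b / 2 * |x|) := by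
    rw [← Real.exp_add, ← Real.exp_add]
    apply Real.exp_le_exp.2
    nlinarith
  calc _ ≤ _ := h
    _ ≤ 1 + α * s * (y - x) + α ^ 2 * (32 / b ^ 2 * (Real.exp (b / 4 * w) * Real.exp (b / 4 * w))) := by
        have : w ^ 2 * Real.exp (α * w) ≤
          (32 / b ^ 2 * Real.exp (b / 4 * w)) * Real.exp (b / 4 * w) := by gcongr
        have := mul_le_mul_of_nonneg_left this (sq_nonneg α)
        linarith
    _ ≤ 1 + α * s * (y - x) + α ^ 2 * (32 / b ^ 2 * (Real.exp (b / 2 * |y|) * Real.exp (b / 2 * |x|))) := by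
        gcongr
    _ = _ := by ring

lemma aux_main (μ : Measure ℝ) [IsProbabilityMeasure μ] (a b y d α s : ℝ)
    (ha : 0 < a) (hb : 0 < b)
    (ht : ∀ t : ℝ, 0 ≤ t → μ {x : ℝ | t < |x|} ≤ ENNReal.ofReal (a * Real.exp (-b * t)))
    (hs : |s| = 1) (hm : d ≤ s * ((∫ x, x ∂μ) - y)) (hα : 0 < α) (hαb : α ≤ b / 4)
    (hαd : α * ((32 / b ^ 2 * Real.exp (b / 2 * |y|)) * (1 + a)) ≤ d / 2) :
    ∫ x, Real.exp (α * s * (y - x)) ∂μ ≤ 1 - α * d / 2 := by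
  obtain ⟨hi, hM⟩ := aux_moment μ a b ha hb ht
  have hx : Integrable (fun x : ℝ => x) μ := by
    refine (hi.const_mul (2 / b)).mono' (by fun_prop) (Eventually.of_forall fun x => ?_)
    have := Real.add_one_le_exp (b / 2 * |x|)
    rw [Real.norm_eq_abs]
    calc |x| = 2 / b * (b / 2 * |x|) := by field_simp
      _ ≤ _ := by gcongr; linarith
  set K := 32 / b ^ 2 * Real.exp (b / 2 * |y|) with hK
  have hK0 : 0 < K := by positivity
  have i0 : Integrable (fun x : ℝ => α * s * (y - x)) μ :=
    ((integrable_const y).sub hx).const_mul _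
  have i1 : Integrable (fun x : ℝ => 1 + α * s * (y - x)) μ :=
    (integrable_const _).add (((integrable_const y).sub hx).const_mul _)
  have i2 : Integrable (fun x : ℝ => α ^ 2 * K * Real.exp (b / 2 * |x|)) μ := hi.const_mul _
  calc _ ≤ ∫ x, (1 + α * s * (y - x) + α ^ 2 * K * Real.exp (b / 2 * |x|)) ∂μ := by
        refine integral_mono_of_nonneg (Eventually.of_forall fun x => (Real.exp_pos _).le)
          (i1.add i2) (Eventually.of_forall fun x => ?_)
        exact aux_pt b y α s x hb hα hαb hs
    _ = 1 + α * s * (y - ∫ x, x ∂μ) + α ^ 2 * K * ∫ x, Real.exp (b / 2 * |x|) ∂μ := by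
        rw [integral_add i1 i2, integral_const_mul,
          integral_add (integrable_const _) i0,
          integral_const_mul, integral_sub (integrable_const y) hx]
        simp
    _ ≤ 1 - α * d + α * (α * (K * (1 + a))) := by
        have h1 := mul_le_mul_of_nonneg_left hm hα.le
        have h2 : α ^ 2 * K * ∫ x, Real.exp (b / 2 * |x|) ∂μ ≤ α ^ 2 * K * (1 + a) := by gcongr
        nlinarith
    _ ≤ _ := by
        have := mul_le_mul_of_nonneg_left hαd hα.le
        linarith

/-- Lemma on exponential drift, non-centred case: under PUR (with constants
`d, k`) and GTIP of the centred parametrisation, for all sufficiently small `α > 0`,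
writing `x̃ = x - θ` (so `y - x̃ = y - x + θ`), the stated exponential moment bounds hold. -/
theorem pur_gtip_exponential_moment_bounds (f₁ f₂ : ℝ → ℝ) (y : ℝ)
    (hf₁c : Continuous f₁) (hf₂c : Continuous f₂)
    (hf₁pos : ∀ t, 0 < f₁ t) (hf₂pos : ∀ t, 0 < f₂ t)
    (hf₁bdd : ∃ M, ∀ t, f₁ t ≤ M) (hf₂bdd : ∃ M, ∀ t, f₂ t ≤ M)
    (hf₁sym : ∀ t, f₁ (-t) = f₁ t) (hf₂sym : ∀ t, f₂ (-t) = f₂ t)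
    (hf₁prob : ∫ t, f₁ t = 1) (hf₂prob : ∫ t, f₂ t = 1)
    (hjint : ∀ θ, Integrable (fun x => fjoint f₁ f₂ y θ x))
    (hcpos : ∀ θ, 0 < cnorm f₁ f₂ y θ)
    (d k : ℝ) (hd : 0 < d) (hk : 0 < k)
    (hPUR : ∀ θ : ℝ, k < |θ| →
      d ≤ Real.sign θ * ((∫ x, x * post f₁ f₂ y θ x) - y))
    (hGTIP : ∃ a > (0 : ℝ), ∃ b > (0 : ℝ), ∀ θ : ℝ, ∀ t : ℝ, 0 ≤ t →
      (∫ x in {x : ℝ | t < |x|}, post f₁ f₂ y θ x) ≤ a * Real.exp (-b * t)) :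
    ∃ α₀ > (0 : ℝ), ∀ α : ℝ, 0 < α → α < α₀ →
      (∀ θ : ℝ, k < θ →
        (∫ x, Real.exp (α * (y - x + θ)) * post f₁ f₂ y θ x) ≤
          Real.exp (α * θ) * (1 - α * d / 2)) ∧
      (∀ θ : ℝ, θ < -k →
        (∫ x, Real.exp (-α * (y - x + θ)) * post f₁ f₂ y θ x) ≤
          Real.exp (-α * θ) * (1 - α * d / 2)) := by
  obtain ⟨a, ha, b, hb, hT⟩ := hGTIP
  set K := (32 / b ^ 2 * Real.exp (b / 2 * |y|)) * (1 + a) with hK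
  have hK0 : 0 < K := by positivity
  have hpc : ∀ θ, Continuous (post f₁ f₂ y θ) := by
    intro θ
    unfold post fjoint
    fun_prop
  have hpn : ∀ θ x, 0 ≤ post f₁ f₂ y θ x := fun θ x =>
    div_nonneg (mul_nonneg (hf₁pos _).le (hf₂pos _).le) (hcpos θ).le
  have hpi : ∀ θ, Integrable (post f₁ f₂ y θ) := fun θ => (hjint θ).div_const _
  have hp1 : ∀ θ, ∫ x, post f₁ f₂ y θ x = 1 := by
    intro θ
    have : ∫ x, post f₁ f₂ y θ x = cnorm f₁ f₂ y θ / cnorm f₁ f₂ y θ := by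
      unfold post
      rw [integral_div]
      rfl
    rw [this, div_self (hcpos θ).ne']
  set μ : ℝ → Measure ℝ := fun θ => volume.withDensity
    (fun x => ENNReal.ofReal (post f₁ f₂ y θ x)) with hμ
  have hprob : ∀ θ, IsProbabilityMeasure (μ θ) := by
    intro θ
    refine ⟨?_⟩
    simp only [hμ]
    rw [withDensity_apply _ MeasurableSet.univ, Measure.restrict_univ,
      ← ofReal_integral_eq_lintegral_ofReal (hpi θ) (Eventually.of_forall (hpn θ)), hp1]
    simp
  have hmeasO : ∀ θ, Measurable (fun x => ENNReal.ofReal (post f₁ f₂ y θ x)) :=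
    fun θ => (hpc θ).measurable.ennreal_ofReal
  have hint : ∀ θ (g : ℝ → ℝ), ∫ x, g x ∂(μ θ) = ∫ x, g x * post f₁ f₂ y θ x := by
    intro θ g
    simp only [hμ]
    rw [integral_withDensity_eq_integral_toReal_smul (hmeasO θ)
      (Eventually.of_forall fun x => ENNReal.ofReal_lt_top)]
    refine integral_congr_ae (Eventually.of_forall fun x => ?_)
    simp only [ENNReal.toReal_ofReal (hpn θ x), smul_eq_mul, mul_comm]
  have htail : ∀ θ (t : ℝ), 0 ≤ t →
      μ θ {x : ℝ | t < |x|} ≤ ENNReal.ofReal (a * Real.exp (-b * t)) := by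
    intro θ t ht
    simp only [hμ]
    rw [withDensity_apply _ (measurableSet_lt measurable_const (by fun_prop)),
      ← ofReal_integral_eq_lintegral_ofReal (hpi θ).integrableOn (Eventually.of_forall (hpn θ))]
    exact ENNReal.ofReal_le_ofReal (hT θ t ht)
  have key : ∀ θ α s : ℝ, |s| = 1 → d ≤ s * ((∫ x, x * post f₁ f₂ y θ x) - y) → 0 < α →
      α < min (b / 4) (d / (2 * K)) →
      (∫ x, Real.exp (α * s * (y - x + θ)) * post f₁ f₂ y θ x) ≤
          Real.exp (α * s * θ) * (1 - α * d / 2) := by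
    intro θ α s hs hm hα hα0
    have := hprob θ
    have h1 : α ≤ b / 4 := (hα0.trans_le (min_le_left _ _)).le
    have h2 : α ≤ d / (2 * K) := (hα0.trans_le (min_le_right _ _)).le
    have h3 : α * K ≤ d / 2 := by
      rw [le_div_iff₀ (by positivity)] at h2
      linarith
    have h := aux_main (μ θ) a b y d α s ha hb (htail θ) hs (by rw [hint]; exact hm) hα h1 h3
    rw [hint] at h
    calc _ = Real.exp (α * s * θ) * ∫ x, Real.exp (α * s * (y - x)) * post f₁ f₂ y θ x := by
          rw [← integral_const_mul]
          congr 1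
          ext x
          rw [mul_add, Real.exp_add]
          ring
      _ ≤ _ := by gcongr
  refine ⟨min (b / 4) (d / (2 * K)), by positivity, fun α hα hα0 => ⟨fun θ hθ => ?_, fun θ hθ => ?_⟩⟩
  · have hm := hPUR θ (hθ.trans_le (le_abs_self θ))
    rw [Real.sign_of_pos (hk.trans hθ)] at hm
    simpa using key θ α 1 (by simp) hm hα hα0
  · have hm := hPUR θ (by rw [abs_of_neg (by linarith)]; linarith)
    rw [Real.sign_of_neg (by linarith)] at hm
    simpa using key θ α (-1) (by simp) hm hα hα0
end
end

section
/- Let p : ℝ × ℝ → [0, ∞) be a measurable transition density (∫_ℝ p(x, u) du = 1 for every x), and let π be an everywhere positive probability density on ℝ with respect to which the chain is reversible: π(x)·p(x, u) = π(u)·p(u, x) for all x, u ∈ ℝ. Suppose there is a continuous, everywhere positive probability density q on ℝ, symmetric about 0, such that for every z ∈ ℝ, lim_{|x| → ∞} p(x, x + z) = q(z). Then π has heavy tails in the sense that lim_{x → ∞} (log ∫_x^∞ π(u) du)/x = 0 and lim_{x → ∞} (log ∫_{−∞}^{−x} π(u) du)/(−x) = 0. -/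
open MeasureTheory Filter Set

lemma tail_aux (f : ℝ → ℝ) (hpos : ∀ x, 0 < f x) (hint : Integrable f) (h1 : ∫ x, f x = 1)
    (hr : ∀ c : ℝ, 0 < c → c < 1 → ∀ᶠ x in atTop, c * f x ≤ f (x + 1)) :
    Tendsto (fun x => Real.log (∫ u in Ici x, f u) / x) atTop (nhds 0) := by
  set F : ℝ → ℝ := fun x => ∫ u in Ici x, f u with hF
  have hFpos : ∀ x, 0 < F x := by
    intro x
    rw [hF]
    simp only
    rw [setIntegral_pos_iff_support_of_nonneg_ae]
    · have : Function.support f = univ := by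
        ext y; simp [(hpos y).ne']
      rw [this]; simp
    · exact Eventually.of_forall fun y => (hpos y).le
    · exact hint.integrableOn
  have hFle : ∀ x, F x ≤ 1 := by
    intro x
    rw [← h1]
    exact setIntegral_le_integral hint (Eventually.of_forall fun y => (hpos y).le)
  have hFanti : ∀ x y, x ≤ y → F y ≤ F x := by
    intro x y hxy
    exact setIntegral_mono_set hint.integrableOn (Eventually.of_forall fun y => (hpos y).le)
      (Ici_subset_Ici.2 hxy).eventuallyLE
  have hshift : ∀ x, F (x + 1) = ∫ u in Ici x, f (u + 1) := by
    intro x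
    have := (measurePreserving_add_right (volume : Measure ℝ) 1).setIntegral_preimage_emb
      (measurableEmbedding_addRight 1) f (Ici (x + 1))
    simp only [hF]
    rw [← this]
    simp
  have key : ∀ ε : ℝ, 0 < ε → ∀ᶠ x in atTop, -ε < Real.log (F x) / x := by
    intro ε hε
    set δ := ε / 2 with hδ
    have hδ0 : 0 < δ := by positivity
    obtain ⟨X, hX⟩ := eventually_atTop.1 (hr (Real.exp (-δ)) (Real.exp_pos _)
      (by rw [Real.exp_lt_one_iff]; linarith))
    have hstep : ∀ y, X ≤ y → Real.exp (-δ) * F y ≤ F (y + 1) := by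
      intro y hy
      rw [hshift]
      simp only [hF]
      rw [← integral_const_mul]
      apply setIntegral_mono_on
      · exact (hint.const_mul _).integrableOn
      · exact (hint.comp_add_right 1).integrableOn
      · exact measurableSet_Ici
      · intro u hu
        exact hX u (le_trans hy hu)
    have hlog : ∀ n : ℕ, Real.log (F X) - δ * n ≤ Real.log (F (X + n)) := by
      intro n
      induction n with
      | zero => simp
      | succ n ih =>
        have h := hstep (X + n) (by simp)
        have h2 := Real.log_le_log (mul_pos (Real.exp_pos _) (hFpos _)) h
        rw [Real.log_mul (Real.exp_pos _).ne' (hFpos _).ne', Real.log_exp] at h2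
        push_cast
        rw [← add_assoc]
        linarith
    filter_upwards [eventually_ge_atTop X, eventually_gt_atTop 0,
      eventually_gt_atTop ((δ * (1 - X) - Real.log (F X)) / δ)] with x hxX hx0 hx
    have hn1 : x - X ≤ (⌈x - X⌉₊ : ℝ) := Nat.le_ceil _
    have hn2 : (⌈x - X⌉₊ : ℝ) < x - X + 1 := Nat.ceil_lt_add_one (by linarith)
    have h3 := Real.log_le_log (hFpos _) (hFanti x (X + (⌈x - X⌉₊ : ℝ)) (by linarith))
    have h4 := hlog ⌈x - X⌉₊
    rw [div_lt_iff₀ hδ0] at hx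
    rw [lt_div_iff₀ hx0]
    have h5 : δ * (⌈x - X⌉₊ : ℝ) < δ * (x - X + 1) := mul_lt_mul_of_pos_left hn2 hδ0
    have h6 : ε = 2 * δ := by rw [hδ]; ring
    rw [h6]
    nlinarith
  rw [Metric.tendsto_nhds]
  intro ε hε
  filter_upwards [key ε hε, eventually_gt_atTop 0] with x hx hx0
  rw [Real.dist_eq, sub_zero, abs_lt]
  refine ⟨hx, lt_of_le_of_lt ?_ hε⟩
  exact div_nonpos_of_nonpos_of_nonneg (Real.log_nonpos (hFpos x).le (hFle x)) hx0.le

/-- a reversible Markov chain on `ℝ` whose transition density is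
random-walk-like in the tails has a stationary density with heavy tails, in the sense
that `log ∫_x^∞ π(u) du / x → 0` and `log ∫_{-∞}^{-x} π(u) du / (-x) → 0` as `x → ∞`. -/
theorem random_walk_like_implies_heavy_tails (p : ℝ → ℝ → ℝ) (π : ℝ → ℝ) (q : ℝ → ℝ)
    (hp_meas : Measurable (Function.uncurry p))
    (hp_nonneg : ∀ x u, 0 ≤ p x u)
    (hp_prob : ∀ x, ∫ u, p x u = 1)
    (hπ_pos : ∀ x, 0 < π x) (hπ_prob : ∫ x, π x = 1)
    (hrev : ∀ x u, π x * p x u = π u * p u x)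
    (hq_cont : Continuous q) (hq_pos : ∀ z, 0 < q z)
    (hq_sym : ∀ z, q (-z) = q z) (hq_prob : ∫ z, q z = 1)
    (hrw : ∀ z : ℝ, Tendsto (fun x => p x (x + z)) (cocompact ℝ) (nhds (q z))) :
    Tendsto (fun x => Real.log (∫ u in Ici x, π u) / x) atTop (nhds 0) ∧
    Tendsto (fun x => Real.log (∫ u in Iic (-x), π u) / (-x)) atTop (nhds 0) := by
  have hint : Integrable π := by
    by_contra h
    rw [integral_undef h] at hπ_prob
    exact zero_ne_one hπ_prob
  have key : ∀ z c : ℝ, 0 < c → c < 1 → ∀ᶠ x in cocompact ℝ, c * π x ≤ π (x + z) := by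
    intro z c hc0 hc1
    have t1 := hrw z
    have t2 : Tendsto (fun x => p (x + z) x) (cocompact ℝ) (nhds (q z)) := by
      have := (hrw (-z)).comp (Homeomorph.addRight z).isClosedEmbedding.tendsto_cocompact
      rw [hq_sym] at this
      refine this.congr fun x => ?_
      simp
    have t3 := t2.const_mul c
    have hlt : c * q z < q z := by nlinarith [hq_pos z]
    filter_upwards [t3.eventually_lt t1 hlt, t2.eventually (lt_mem_nhds (hq_pos z))] with x h1 h2
    have h3 := hrev x (x + z)
    have h4 := mul_lt_mul_of_pos_left h1 (hπ_pos x)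
    refine le_of_mul_le_mul_right ?_ h2
    linarith
  rw [cocompact_eq_atBot_atTop] at key
  constructor
  · exact tail_aux π hπ_pos hint hπ_prob fun c h0 h1 => (eventually_sup.1 (key 1 c h0 h1)).2
  · have h := tail_aux (fun x => π (-x)) (fun x => hπ_pos _) hint.comp_neg
      (by rw [integral_neg_eq_self π volume]; exact hπ_prob) (by
        intro c h0 h1
        have := tendsto_neg_atTop_atBot.eventually (eventually_sup.1 (key (-1) c h0 h1)).1
        filter_upwards [this] with x hx
        rw [neg_add]
        exact hx)
    have h2 := h.neg
    rw [neg_zero] at h2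
    refine h2.congr fun x => ?_
    rw [integral_Ici_eq_integral_Ioi, integral_comp_neg_Ioi, div_neg]
end

section
/- Let p : ℝ × ℝ → [0, ∞) be a measurable transition density (∫_ℝ p(x, u) du = 1 for every x), and let π be an everywhere positive probability density on ℝ with respect to which the chain is reversible: π(x)·p(x, u) = π(u)·p(u, x) for all x, u. Let P be the associated Markov kernel, P(x, A) = ∫_A p(x, u) du, with n-step kernel Pⁿ, and let Π be the probability measure with density π (which is stationary for P). Assume P is Π-irreducible: for every x ∈ ℝ and every Borel set A with Π(A) > 0 there is n ≥ 1 with Pⁿ(x, A) > 0. Suppose there is a continuous, everywhere positive probability density q on ℝ, symmetric about 0, such that for every z ∈ ℝ, lim_{|x| → ∞} p(x, x + z) = q(z). Then the chain is not geometrically ergodic: there do not exist r ∈ [0,1) and a function M : ℝ → [0,∞) such that for every x₀ ∈ ℝ and every n ≥ 1, ‖Pⁿ(x₀, ·) − Π‖_TV ≤ M(x₀)·rⁿ. -/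
open MeasureTheory Filter Set

noncomputable section

/-- `n`-step transition density built from a one-step transition density `p`
(for `n ≥ 1`; the value at `n = 0` is unused). -/
def iterDens (p : ℝ → ℝ → ℝ) : ℕ → ℝ → ℝ → ℝ
  | 0, _, _ => 0
  | 1, x, u => p x u
  | (n + 2), x, u => ∫ v, iterDens p (n + 1) x v * p v u

def Pop (p : ℝ → ℝ → ℝ) (f : ℝ → ℝ) : ℝ → ℝ := fun x => ∫ u, p x u * f u

def BM (f : ℝ → ℝ) : Prop := Measurable f ∧ ∃ C, ∀ x, |f x| ≤ C

lemma BM.mul_int {f h : ℝ → ℝ} (hf : BM f) (hh : Integrable h) :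
    Integrable (fun x => h x * f x) := by
  obtain ⟨hm, C, hC⟩ := hf
  exact hh.mul_bdd (c := C) hm.aestronglyMeasurable (Eventually.of_forall hC)

lemma BM.mul {f g : ℝ → ℝ} (hf : BM f) (hg : BM g) : BM (fun x => f x * g x) := by
  obtain ⟨hm, C, hC⟩ := hf
  obtain ⟨hm', C', hC'⟩ := hg
  refine ⟨hm.mul hm', C * C', fun x => ?_⟩
  rw [abs_mul]
  exact mul_le_mul (hC x) (hC' x) (abs_nonneg _) ((abs_nonneg _).trans (hC x))

lemma BM.sub_const {f : ℝ → ℝ} (hf : BM f) (c : ℝ) : BM (fun x => f x - c) := by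
  obtain ⟨hm, C, hC⟩ := hf
  refine ⟨hm.sub_const c, C + |c|, fun x => ?_⟩
  exact (abs_sub _ _).trans (by linarith [hC x])

lemma BM.const (c : ℝ) : BM (fun _ => c) := ⟨measurable_const, |c|, fun _ => le_rfl⟩

lemma p_int {p : ℝ → ℝ → ℝ} (hp_prob : ∀ x, ∫ u, p x u = 1) (x : ℝ) : Integrable (p x) := by
  by_contra h
  have := hp_prob x
  rw [integral_undef h] at this
  norm_num at this

lemma Pop_bm {p : ℝ → ℝ → ℝ} (hp_meas : Measurable (Function.uncurry p))
    (hp_nonneg : ∀ x u, 0 ≤ p x u) (hp_prob : ∀ x, ∫ u, p x u = 1) {f : ℝ → ℝ} (hf : BM f) :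
    BM (Pop p f) := by
  have hf' := hf
  obtain ⟨hm, C, hC⟩ := hf
  constructor
  · have : StronglyMeasurable (Function.uncurry fun x u => p x u * f u) :=
      (hp_meas.mul (hm.comp measurable_snd)).stronglyMeasurable
    exact this.integral_prod_right.measurable
  · refine ⟨C, fun x => ?_⟩
    have h1 : |Pop p f x| ≤ ∫ u, |p x u * f u| := abs_integral_le_integral_abs
    have h2 : ∫ u, |p x u * f u| ≤ ∫ u, p x u * C := by
      apply integral_mono (hf'.mul_int (p_int hp_prob x)).abs ((p_int hp_prob x).mul_const C)
      intro u
      simp only [abs_mul, abs_of_nonneg (hp_nonneg x u)]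
      exact mul_le_mul_of_nonneg_left (hC u) (hp_nonneg x u)
    rw [integral_mul_const, hp_prob] at h2
    linarith

lemma iter_bm {p : ℝ → ℝ → ℝ} (hp_meas : Measurable (Function.uncurry p))
    (hp_nonneg : ∀ x u, 0 ≤ p x u) (hp_prob : ∀ x, ∫ u, p x u = 1) (n : ℕ) :
    ∀ {f : ℝ → ℝ} (_ : BM f), BM ((Pop p)^[n] f) := by
  induction n with
  | zero => intro f hf; exact hf
  | succ n ih => intro f hf; exact ih (Pop_bm hp_meas hp_nonneg hp_prob hf)

lemma iterDens_meas {p : ℝ → ℝ → ℝ} (hp_meas : Measurable (Function.uncurry p)) (n : ℕ) :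
    Measurable (Function.uncurry (iterDens p (n+1))) := by
  induction n with
  | zero => exact hp_meas
  | succ n ih =>
    have : StronglyMeasurable (Function.uncurry fun (z : ℝ × ℝ) (v : ℝ) =>
        iterDens p (n + 1) z.1 v * p v z.2) := by
      apply Measurable.stronglyMeasurable
      apply Measurable.mul
      · exact ih.comp (by fun_prop : Measurable fun w : (ℝ × ℝ) × ℝ => (w.1.1, w.2))
      · exact hp_meas.comp (by fun_prop : Measurable fun w : (ℝ × ℝ) × ℝ => (w.2, w.1.2))
    exact this.integral_prod_right.measurable

lemma prod_int {p : ℝ → ℝ → ℝ} (hp_meas : Measurable (Function.uncurry p))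
    (hp_nonneg : ∀ x u, 0 ≤ p x u) (hp_prob : ∀ x, ∫ u, p x u = 1) {h : ℝ → ℝ}
    (hh : Integrable h) :
    Integrable (fun z : ℝ × ℝ => h z.1 * p z.1 z.2) (volume.prod volume) := by
  have hm : AEStronglyMeasurable (fun z : ℝ × ℝ => h z.1 * p z.1 z.2) (volume.prod volume) :=
    hh.aestronglyMeasurable.comp_fst.mul hp_meas.aestronglyMeasurable
  rw [integrable_prod_iff hm]
  refine ⟨Eventually.of_forall fun x => (p_int hp_prob x).const_mul (h x), ?_⟩
  have : (fun x => ∫ y, ‖h x * p x y‖) = fun x => |h x| := by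
    funext x
    simp only [norm_mul, Real.norm_eq_abs, abs_of_nonneg (hp_nonneg x _)]
    rw [integral_const_mul, hp_prob, mul_one]
  simp only [this]
  exact hh.abs

lemma prod_int' {p : ℝ → ℝ → ℝ} (hp_meas : Measurable (Function.uncurry p))
    (hp_nonneg : ∀ x u, 0 ≤ p x u) (hp_prob : ∀ x, ∫ u, p x u = 1) {h : ℝ → ℝ}
    (hh : Integrable h) {f : ℝ → ℝ} (hf : BM f) :
    Integrable (fun z : ℝ × ℝ => h z.1 * p z.1 z.2 * f z.2) (volume.prod volume) := by
  obtain ⟨hm, C, hC⟩ := hf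
  exact (prod_int hp_meas hp_nonneg hp_prob hh).mul_bdd (c := C)
    (hm.comp measurable_snd).aestronglyMeasurable (Eventually.of_forall fun z => hC z.2)

lemma iterDens_int {p : ℝ → ℝ → ℝ} (hp_meas : Measurable (Function.uncurry p))
    (hp_nonneg : ∀ x u, 0 ≤ p x u) (hp_prob : ∀ x, ∫ u, p x u = 1) (n : ℕ) (x : ℝ) :
    Integrable (iterDens p (n+1) x) := by
  induction n with
  | zero => exact p_int hp_prob x
  | succ n ih => exact (prod_int hp_meas hp_nonneg hp_prob ih).integral_prod_right

lemma iterDens_op {p : ℝ → ℝ → ℝ} (hp_meas : Measurable (Function.uncurry p))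
    (hp_nonneg : ∀ x u, 0 ≤ p x u) (hp_prob : ∀ x, ∫ u, p x u = 1) (n : ℕ) (x : ℝ) :
    ∀ {f : ℝ → ℝ} (_ : BM f), ∫ u, iterDens p (n+1) x u * f u = (Pop p)^[n+1] f x := by
  induction n with
  | zero => intro f hf; rfl
  | succ n ih =>
    intro f hf
    rw [Function.iterate_succ_apply, ← ih (Pop_bm hp_meas hp_nonneg hp_prob hf)]
    have hI := prod_int' hp_meas hp_nonneg hp_prob
      (iterDens_int hp_meas hp_nonneg hp_prob n x) hf
    have := integral_integral_swap (f := fun v u => iterDens p (n+1) x v * p v u * f u) hI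
    calc ∫ u, iterDens p (n+1+1) x u * f u
        = ∫ u, ∫ v, iterDens p (n+1) x v * p v u * f u := by
          congr 1; funext u; rw [integral_mul_const]; rfl
      _ = ∫ v, ∫ u, iterDens p (n+1) x v * p v u * f u := this.symm
      _ = _ := by
          congr 1; funext v; simp only [mul_assoc]; rw [integral_const_mul]; rfl

lemma Pop_sub {p : ℝ → ℝ → ℝ} (hp_prob : ∀ x, ∫ u, p x u = 1)
    {f : ℝ → ℝ} (hf : BM f) (c : ℝ) :
    Pop p (fun x => f x - c) = fun x => Pop p f x - c := by
  funext x
  simp only [Pop, mul_sub]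
  rw [integral_sub (hf.mul_int (p_int hp_prob x)) ((p_int hp_prob x).mul_const c),
    integral_mul_const, hp_prob, one_mul]

lemma iter_sub {p : ℝ → ℝ → ℝ} (hp_meas : Measurable (Function.uncurry p))
    (hp_nonneg : ∀ x u, 0 ≤ p x u) (hp_prob : ∀ x, ∫ u, p x u = 1) (c : ℝ) (n : ℕ) :
    ∀ {f : ℝ → ℝ} (_ : BM f), (Pop p)^[n] (fun x => f x - c) = fun x => (Pop p)^[n] f x - c := by
  induction n with
  | zero => intro f hf; rfl
  | succ n ih =>
    intro f hf
    rw [Function.iterate_succ_apply, Pop_sub hp_prob hf, ih (Pop_bm hp_meas hp_nonneg hp_prob hf)]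
    rfl

lemma iter_one {p : ℝ → ℝ → ℝ} (hp_prob : ∀ x, ∫ u, p x u = 1) (n : ℕ) :
    (Pop p)^[n] (fun _ => 1) = fun _ => 1 := by
  induction n with
  | zero => rfl
  | succ n ih =>
    rw [Function.iterate_succ_apply]
    have : Pop p (fun _ => 1) = fun _ => 1 := by
      funext x; simp [Pop, hp_prob]
    rw [this, ih]

lemma Pop_symm {p : ℝ → ℝ → ℝ} {π : ℝ → ℝ} (hp_meas : Measurable (Function.uncurry p))
    (hp_nonneg : ∀ x u, 0 ≤ p x u) (hp_prob : ∀ x, ∫ u, p x u = 1)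
    (hπ : Integrable π) (hrev : ∀ x u, π x * p x u = π u * p u x)
    {f g : ℝ → ℝ} (hf : BM f) (hg : BM g) :
    ∫ x, π x * (f x * Pop p g x) = ∫ x, π x * (Pop p f x * g x) := by
  have hI := prod_int' hp_meas hp_nonneg hp_prob (hf.mul_int hπ) hg
  have := integral_integral_swap (f := fun x u => π x * f x * p x u * g u) hI
  calc ∫ x, π x * (f x * Pop p g x) = ∫ x, ∫ u, π x * f x * p x u * g u := by
        congr 1; funext x; simp only [mul_assoc]; rw [integral_const_mul, integral_const_mul]; rfl
    _ = ∫ u, ∫ x, π x * f x * p x u * g u := this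
    _ = _ := by
        congr 1; funext u
        have : ∀ x, π x * f x * p x u * g u = π u * g u * (p u x * f x) := fun x => by
          linear_combination (f x * g u) * hrev x u
        simp only [this]
        rw [integral_const_mul]
        simp only [Pop]; ring

lemma iter_symm {p : ℝ → ℝ → ℝ} {π : ℝ → ℝ} (hp_meas : Measurable (Function.uncurry p))
    (hp_nonneg : ∀ x u, 0 ≤ p x u) (hp_prob : ∀ x, ∫ u, p x u = 1)
    (hπ : Integrable π) (hrev : ∀ x u, π x * p x u = π u * p u x) (n : ℕ) :
    ∀ {f g : ℝ → ℝ} (_ : BM f) (_ : BM g),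
    ∫ x, π x * (f x * (Pop p)^[n] g x) = ∫ x, π x * ((Pop p)^[n] f x * g x) := by
  induction n with
  | zero => intro f g hf hg; rfl
  | succ n ih =>
    intro f g hf hg
    rw [Function.iterate_succ_apply, ih hf (Pop_bm hp_meas hp_nonneg hp_prob hg),
      Pop_symm hp_meas hp_nonneg hp_prob hπ hrev (iter_bm hp_meas hp_nonneg hp_prob n hf) hg,
      Function.iterate_succ_apply']

lemma cs {π : ℝ → ℝ} (hπ : Integrable π) (hπ_pos : ∀ x, 0 < π x)
    {f g : ℝ → ℝ} (hf : BM f) (hg : BM g) :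
    (∫ x, π x * (f x * g x)) ^ 2 ≤ (∫ x, π x * (f x * f x)) * ∫ x, π x * (g x * g x) := by
  have h : ∀ t : ℝ, 0 ≤ (∫ x, π x * (f x * f x)) * (t * t) + (2 * ∫ x, π x * (f x * g x)) * t +
      ∫ x, π x * (g x * g x) := by
    intro t
    have i1 := ((hf.mul hf).mul_int hπ).mul_const (t * t)
    have i2 := (((hf.mul hg).mul_int hπ).const_mul 2).mul_const t
    have i3 := (hg.mul hg).mul_int hπ
    rw [← integral_const_mul, ← integral_mul_const, ← integral_mul_const, ← integral_add i1 i2]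
    have i12 : Integrable (fun x => π x * (f x * f x) * (t * t) + 2 * (π x * (f x * g x)) * t) :=
      i1.add i2
    rw [← integral_add i12 i3]
    apply integral_nonneg
    intro x
    have : 0 ≤ π x * (f x * t + g x) ^ 2 := mul_nonneg (hπ_pos x).le (sq_nonneg _)
    simp only [Pi.zero_apply]
    nlinarith
  have := discrim_le_zero h
  unfold discrim at this
  nlinarith

lemma seq_lemma (b : ℕ → ℝ) (C r : ℝ) (hr : 0 ≤ r) (h0 : 0 ≤ b 0)
    (h : ∀ m, b m ^ 2 ≤ b 0 * b (2 * m)) (hC : ∀ m, 1 ≤ m → b m ≤ C * r ^ m) :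
    b 1 ≤ r * b 0 := by
  rcases h0.eq_or_lt with h0 | h0
  · have := h 1
    rw [← h0] at this ⊢
    nlinarith
  by_contra! hlt
  set t := b 1 / b 0 with ht
  have hrt : r < t := by rw [ht, lt_div_iff₀ h0]; exact hlt
  have htp : 0 < t := hr.trans_lt hrt
  have key : ∀ k : ℕ, t ^ (2 ^ k) * b 0 ≤ b (2 ^ k) := by
    intro k
    induction k with
    | zero => simp [ht, h0.ne']
    | succ k ih =>
      have h1 := h (2 ^ k)
      have h2 : (t ^ (2 ^ k) * b 0) ^ 2 ≤ b (2 ^ k) ^ 2 :=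
        pow_le_pow_left₀ (by positivity) ih 2
      have h3 : b 0 * (t ^ (2 ^ (k+1)) * b 0) ≤ b 0 * b (2 ^ (k+1)) := by
        rw [pow_succ 2 k, pow_mul, mul_comm (2 ^ k) 2]
        calc _ = (t ^ (2 ^ k) * b 0) ^ 2 := by ring
          _ ≤ _ := h2.trans h1
      exact le_of_mul_le_mul_left h3 h0
  have hlim : Tendsto (fun k : ℕ => C * (r / t) ^ (2 ^ k)) atTop (nhds (C * 0)) := by
    apply Tendsto.const_mul
    exact (tendsto_pow_atTop_nhds_zero_of_lt_one (by positivity) ((div_lt_one htp).2 hrt)).comp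
      (tendsto_pow_atTop_atTop_of_one_lt (by norm_num))
  have hle : ∀ k : ℕ, b 0 ≤ C * (r / t) ^ (2 ^ k) := by
    intro k
    have h1 := (key k).trans (hC _ Nat.one_le_two_pow)
    rw [div_pow, ← mul_div_assoc, le_div_iff₀ (by positivity)]
    linarith
  have := ge_of_tendsto' hlim hle
  linarith

lemma core {p : ℝ → ℝ → ℝ} {π : ℝ → ℝ} (hp_meas : Measurable (Function.uncurry p))
    (hp_nonneg : ∀ x u, 0 ≤ p x u) (hp_prob : ∀ x, ∫ u, p x u = 1)
    (hπ : Integrable π) (hπ_pos : ∀ x, 0 < π x) (hπ_prob : ∫ x, π x = 1)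
    (hrev : ∀ x u, π x * p x u = π u * p u x)
    (r K : ℝ) (hr : 0 ≤ r) (hK : 0 ≤ K) (S : Set ℝ)
    (hS : ∀ x ∈ S, ∀ n : ℕ, 1 ≤ n → (∫ u, |iterDens p n x u - π u|) ≤ K * r ^ n)
    {g : ℝ → ℝ} (hg : BM g) (hgS : ∀ x, x ∉ S → g x = 0) :
    ∫ x, π x * (g x * Pop p g x) ≤
      r * (∫ x, π x * (g x * g x)) + (∫ x, π x * g x) ^ 2 := by
  set c := ∫ x, π x * g x with hc
  set g0 : ℝ → ℝ := fun x => g x - c with hg0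
  have hbg0 : BM g0 := hg.sub_const c
  have hit : ∀ n {f : ℝ → ℝ}, BM f → BM ((Pop p)^[n] f) := fun n f hf =>
    iter_bm hp_meas hp_nonneg hp_prob n hf
  have hmean : ∀ m, ∫ x, π x * (Pop p)^[m] g x = c := by
    intro m
    have := iter_symm hp_meas hp_nonneg hp_prob hπ hrev m (BM.const 1) hg
    rw [iter_one hp_prob] at this
    simpa using this
  have hsub : ∀ m, (Pop p)^[m] g0 = fun x => (Pop p)^[m] g x - c := fun m =>
    iter_sub hp_meas hp_nonneg hp_prob c m hg
  -- first form
  have hb : ∀ m, ∫ x, π x * (g0 x * (Pop p)^[m] g0 x) =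
      ∫ x, π x * (g x * (Pop p)^[m] g0 x) := by
    intro m
    have hz : ∫ x, π x * (Pop p)^[m] g0 x = 0 := by
      simp only [hsub m, mul_sub]
      rw [integral_sub ((hit m hg).mul_int hπ) (hπ.mul_const c), hmean, integral_mul_const,
        hπ_prob]; ring
    have e : ∀ x, π x * (g0 x * (Pop p)^[m] g0 x) =
        π x * (g x * (Pop p)^[m] g0 x) - c * (π x * (Pop p)^[m] g0 x) := by
      intro x; simp only [hg0]; ring
    simp only [e]
    rw [integral_sub ((hg.mul (hit m hbg0)).mul_int hπ) (((hit m hbg0).mul_int hπ).const_mul c),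
      integral_const_mul, hz]; ring
  have hb' : ∀ m, ∫ x, π x * (g0 x * (Pop p)^[m] g0 x) =
      (∫ x, π x * (g x * (Pop p)^[m] g x)) - c ^ 2 := by
    intro m
    rw [hb m]
    have e : ∀ x, π x * (g x * (Pop p)^[m] g0 x) =
        π x * (g x * (Pop p)^[m] g x) - c * (π x * g x) := by
      intro x; rw [hsub m]; ring
    simp only [e]
    rw [integral_sub ((hg.mul (hit m hg)).mul_int hπ) ((hg.mul_int hπ).const_mul c),
      integral_const_mul]; ring
  obtain ⟨hgm, G, hG⟩ := id hg
  have hGn : 0 ≤ G := (abs_nonneg _).trans (hG 0)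
  have hbound : ∀ m, 1 ≤ m → ∫ x, π x * (g0 x * (Pop p)^[m] g0 x) ≤ (G * (G * K)) * r ^ m := by
    intro m hm
    rw [hb m]
    obtain ⟨n, rfl⟩ : ∃ n, m = n + 1 := ⟨m - 1, by omega⟩
    have hpt : ∀ x ∈ S, |(Pop p)^[n+1] g0 x| ≤ G * (K * r ^ (n+1)) := by
      intro x hx
      have hdi := iterDens_int hp_meas hp_nonneg hp_prob n x
      have e : (Pop p)^[n+1] g0 x = ∫ u, (iterDens p (n+1) x u - π u) * g u := by
        rw [hsub]
        change (Pop p)^[n+1] g x - c = _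
        rw [← iterDens_op hp_meas hp_nonneg hp_prob n x hg, hc,
          ← integral_sub (hg.mul_int hdi) (hg.mul_int hπ)]
        simp only [sub_mul]
      rw [e]
      calc |∫ u, (iterDens p (n+1) x u - π u) * g u|
          ≤ ∫ u, |(iterDens p (n+1) x u - π u) * g u| := abs_integral_le_integral_abs
        _ ≤ ∫ u, |iterDens p (n+1) x u - π u| * G := by
            apply integral_mono (hg.mul_int (hdi.sub hπ)).abs ((hdi.sub hπ).abs.mul_const G)
            intro u
            simp only [abs_mul]
            exact mul_le_mul_of_nonneg_left (hG u) (abs_nonneg _)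
        _ ≤ _ := by
            rw [integral_mul_const, mul_comm]
            exact mul_le_mul_of_nonneg_left (hS x hx _ hm) hGn
    calc ∫ x, π x * (g x * (Pop p)^[n+1] g0 x)
        ≤ ∫ x, π x * ((G * (G * K)) * r ^ (n+1)) := by
          apply integral_mono ((hg.mul (hit _ hbg0)).mul_int hπ) (hπ.mul_const _)
          intro x
          apply mul_le_mul_of_nonneg_left _ (hπ_pos x).le
          by_cases hx : x ∈ S
          · calc g x * (Pop p)^[n+1] g0 x ≤ |g x| * |(Pop p)^[n+1] g0 x| := by
                  rw [← abs_mul]; exact le_abs_self _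
              _ ≤ G * (G * (K * r ^ (n+1))) :=
                  mul_le_mul (hG x) (hpt x hx) (abs_nonneg _) hGn
              _ = _ := by ring
          · rw [hgS x hx, zero_mul]; positivity
      _ = _ := by rw [integral_mul_const, hπ_prob, one_mul]
  have hfin := seq_lemma (fun m => ∫ x, π x * (g0 x * (Pop p)^[m] g0 x)) (G * (G * K)) r hr
    (integral_nonneg fun x => mul_nonneg (hπ_pos x).le (mul_self_nonneg _))
    (by
      intro m
      have h1 := cs hπ hπ_pos hbg0 (hit m hbg0)
      have h2 : ∫ x, π x * ((Pop p)^[m] g0 x * (Pop p)^[m] g0 x) =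
          ∫ x, π x * (g0 x * (Pop p)^[2 * m] g0 x) := by
        rw [← iter_symm hp_meas hp_nonneg hp_prob hπ hrev m hbg0 (hit m hbg0), two_mul]
        simp only [Function.iterate_add_apply]
      rw [h2] at h1
      exact h1) hbound
  simp only [hb'] at hfin
  simp only [Function.iterate_one, Function.iterate_zero, id] at hfin
  nlinarith [mul_nonneg hr (sq_nonneg c)]

lemma fatou_aux {α : Type*} [MeasurableSpace α] {μ : Measure α} {F : ℕ → α → ENNReal}
    {f : α → ENNReal} {C : ℕ → ENNReal} {c : ENNReal} (hF : ∀ n, AEMeasurable (F n) μ)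
    (hlim : ∀ᵐ z ∂μ, Tendsto (fun n => F n z) atTop (nhds (f z)))
    (hb : ∀ n, ∫⁻ z, F n z ∂μ ≤ C n) (hC : Tendsto C atTop (nhds c)) :
    ∫⁻ z, f z ∂μ ≤ c := by
  calc ∫⁻ z, f z ∂μ = ∫⁻ z, liminf (fun n => F n z) atTop ∂μ := by
        apply lintegral_congr_ae
        filter_upwards [hlim] with z hz
        exact hz.liminf_eq.symm
    _ ≤ liminf (fun n => ∫⁻ z, F n z ∂μ) atTop := lintegral_liminf_le' hF
    _ ≤ liminf C atTop := liminf_le_liminf (Eventually.of_forall hb)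
    _ = c := hC.liminf_eq

lemma partC {p : ℝ → ℝ → ℝ} {π : ℝ → ℝ} (hp_meas : Measurable (Function.uncurry p))
    (hp_nonneg : ∀ x u, 0 ≤ p x u) (hp_prob : ∀ x, ∫ u, p x u = 1)
    (hπ : Integrable π) (hπ_pos : ∀ x, 0 < π x) (hπ_prob : ∫ x, π x = 1)
    (hrev : ∀ x u, π x * p x u = π u * p u x)
    (r : ℝ) (hr : 0 ≤ r) (M : ℝ → ℝ)
    (hM : ∀ x₀ : ℝ, ∀ n : ℕ, 1 ≤ n → (∫ u, |iterDens p n x₀ u - π u|) ≤ M x₀ * r ^ n)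
    (B : Set ℝ) (hB : MeasurableSet B) (L : ℝ) (hL : 0 ≤ L) (hBL : volume B ≤ ENNReal.ofReal L) :
    ∫⁻ z, (B ×ˢ B).indicator
      (fun z : ℝ × ℝ => ENNReal.ofReal (Real.sqrt (p z.1 z.2 * p z.2 z.1))) z ∂(volume.prod volume)
      ≤ ENNReal.ofReal (r * L + L * ∫ x in B, π x) := by
  obtain ⟨π', hπ'm, hae⟩ : ∃ π' : ℝ → ℝ, Measurable π' ∧ π =ᵐ[volume] π' :=
    ⟨_, hπ.aestronglyMeasurable.stronglyMeasurable_mk.measurable,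
      hπ.aestronglyMeasurable.ae_eq_mk⟩
  have hint : ∀ n x, ∫ u, |iterDens p n x u - π u| = ∫ u, |iterDens p n x u - π' u| := by
    intro n x
    apply integral_congr_ae
    filter_upwards [hae] with u hu
    rw [hu]
  let S : ℕ → Set ℝ := fun K =>
    ⋂ n : ℕ, {x | ∫ u, |iterDens p (n+1) x u - π' u| ≤ K * r ^ (n+1)}
  have hSm : ∀ K, MeasurableSet (S K) := by
    intro K
    refine MeasurableSet.iInter fun n => measurableSet_le ?_ measurable_const
    have : StronglyMeasurable (Function.uncurry fun x u => |iterDens p (n+1) x u - π' u|) :=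
      (measurable_abs.comp ((iterDens_meas hp_meas n).sub
        (hπ'm.comp measurable_snd))).stronglyMeasurable
    exact this.integral_prod_right.measurable
  let A : ℕ → Set ℝ := fun K => B ∩ S K ∩ {x | 1 / ((K : ℝ) + 1) ≤ π' x}
  have hAm : ∀ K, MeasurableSet (A K) := fun K =>
    (hB.inter (hSm K)).inter (measurableSet_le measurable_const hπ'm)
  let g : ℕ → ℝ → ℝ := fun K => (A K).indicator (fun x => (Real.sqrt (π' x))⁻¹)
  have hgn : ∀ K x, 0 ≤ g K x := fun K x =>
    indicator_nonneg (fun x _ => by positivity) x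
  have hg : ∀ K, BM (g K) := by
    intro K
    refine ⟨(Measurable.inv (by fun_prop)).indicator (hAm K), Real.sqrt (K + 1), fun x => ?_⟩
    rw [abs_of_nonneg (hgn K x)]
    by_cases hx : x ∈ A K
    · simp only [g, indicator_of_mem hx]
      rw [← Real.sqrt_inv]
      apply Real.sqrt_le_sqrt
      have h1 : 1 / ((K : ℝ) + 1) ≤ π' x := hx.2
      have h2 : (0:ℝ) < 1 / ((K : ℝ) + 1) := by positivity
      rw [inv_le_comm₀ (h2.trans_le h1) (by positivity)]
      simpa using h1
    · simp only [g, indicator_of_notMem hx]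
      positivity
  have hgA : ∀ K x, x ∉ A K → g K x = 0 := fun K x hx => indicator_of_notMem hx _
  have hcore : ∀ K, ∫ x, π x * (g K x * Pop p (g K) x) ≤
      r * (∫ x, π x * (g K x * g K x)) + (∫ x, π x * g K x) ^ 2 := by
    intro K
    refine core hp_meas hp_nonneg hp_prob hπ hπ_pos hπ_prob hrev r K hr (by positivity) (S K)
      ?_ (hg K) (fun x hx => hgA K x fun h => hx h.1.2)
    intro x hx n hn
    obtain ⟨m, rfl⟩ : ∃ m, n = m + 1 := ⟨n - 1, by omega⟩
    rw [hint]
    exact mem_iInter.1 hx m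
  have hBfin : volume B ≠ ⊤ := (hBL.trans_lt ENNReal.ofReal_lt_top).ne
  have hg2 : ∀ K, ∫ x, π x * (g K x * g K x) ≤ L := by
    intro K
    have h1 : ∫ x, π x * (g K x * g K x) ≤ ∫ x, B.indicator (fun _ => (1:ℝ)) x := by
      apply integral_mono_ae (((hg K).mul (hg K)).mul_int hπ)
      · exact (integrable_indicator_iff hB).2 (integrableOn_const hBfin)
      filter_upwards [hae] with x hx
      by_cases hxA : x ∈ A K
      · have hxB : x ∈ B := hxA.1.1
        simp only [g, indicator_of_mem hxA, indicator_of_mem hxB]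
        rw [← hx, ← mul_inv, Real.mul_self_sqrt (hπ_pos x).le, mul_inv_cancel₀ (hπ_pos x).ne']
      · rw [hgA K x hxA]
        simp only [mul_zero]
        exact indicator_nonneg (fun _ _ => zero_le_one) x
    rw [integral_indicator hB] at h1
    simp only [integral_const, smul_eq_mul, mul_one, measureReal_restrict_apply_univ] at h1
    exact h1.trans (ENNReal.toReal_le_of_le_ofReal hL hBL)
  have hind : BM (B.indicator (fun _ => (1:ℝ))) := by
    refine ⟨measurable_const.indicator hB, 1, fun x => ?_⟩
    by_cases hx : x ∈ B <;> simp [hx]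
  have hPB : 0 ≤ ∫ x in B, π x := setIntegral_nonneg hB fun x _ => (hπ_pos x).le
  have hg1 : ∀ K, (∫ x, π x * g K x) ^ 2 ≤ L * ∫ x in B, π x := by
    intro K
    have h1 := cs hπ hπ_pos (hg K) hind
    have e1 : ∀ x, π x * (g K x * B.indicator (fun _ => (1:ℝ)) x) = π x * g K x := by
      intro x
      by_cases hx : x ∈ B
      · simp [hx]
      · simp [hx, hgA K x (fun h => hx h.1.1)]
    have e2 : ∫ x, π x * (B.indicator (fun _ => (1:ℝ)) x * B.indicator (fun _ => (1:ℝ)) x)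
        = ∫ x in B, π x := by
      rw [← integral_indicator hB]
      congr 1; funext x
      by_cases hx : x ∈ B <;> simp [hx]
    simp only [e1] at h1
    rw [e2] at h1
    exact h1.trans (mul_le_mul_of_nonneg_right (hg2 K) hPB)
  have hI : ∀ K, Integrable (fun z : ℝ × ℝ => π z.1 * g K z.1 * p z.1 z.2 * g K z.2)
      (volume.prod volume) := fun K =>
    prod_int' hp_meas hp_nonneg hp_prob ((hg K).mul_int hπ) (hg K)
  refine fatou_aux (F := fun K z => ENNReal.ofReal (π z.1 * g K z.1 * p z.1 z.2 * g K z.2))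
    (C := fun _ => ENNReal.ofReal (r * L + L * ∫ x in B, π x))
    (fun K => (hI K).aestronglyMeasurable.aemeasurable.ennreal_ofReal) ?_ ?_ tendsto_const_nhds
  · have a1 : ∀ᵐ z : ℝ × ℝ ∂(volume.prod volume), π z.1 = π' z.1 :=
      Measure.quasiMeasurePreserving_fst.ae hae
    have a2 : ∀ᵐ z : ℝ × ℝ ∂(volume.prod volume), π z.2 = π' z.2 :=
      Measure.quasiMeasurePreserving_snd.ae hae
    filter_upwards [a1, a2] with z h1 h2
    obtain ⟨x, u⟩ := z
    simp only at h1 h2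
    by_cases hz : (x, u) ∈ B ×ˢ B
    · rw [indicator_of_mem hz]
      have hA : ∀ y ∈ B, π y = π' y → ∀ᶠ K : ℕ in atTop, y ∈ A K := by
        intro y hy hyy
        have l1 : ∀ᶠ K : ℕ in atTop, M y ≤ K := tendsto_natCast_atTop_atTop.eventually_ge_atTop _
        have l2 : ∀ᶠ K : ℕ in atTop, 1 / ((K : ℝ) + 1) ≤ π' y :=
          (tendsto_one_div_add_atTop_nhds_zero_nat (𝕜 := ℝ)).eventually_le_const
            (hyy ▸ hπ_pos y)
        filter_upwards [l1, l2] with K k1 k2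
        refine ⟨⟨hy, mem_iInter.2 fun n => ?_⟩, k2⟩
        change (∫ v, |iterDens p (n+1) y v - π' v|) ≤ (K:ℝ) * r ^ (n+1)
        rw [← hint]
        exact (hM y (n+1) (by omega)).trans (mul_le_mul_of_nonneg_right k1 (by positivity))
      apply tendsto_const_nhds.congr'
      filter_upwards [hA x hz.1 h1, hA u hz.2 h2] with K k1 k2
      simp only [g, indicator_of_mem k1, indicator_of_mem k2]
      congr 1
      rw [← h1, ← h2]
      have hx := hπ_pos x
      have hu := hπ_pos u
      have sx := Real.sqrt_pos.2 hx
      have su := Real.sqrt_pos.2 hu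
      have e : p u x = π x / π u * p x u := by
        field_simp
        linarith [hrev x u]
      rw [e]
      have e' : p x u * (π x / π u * p x u) =
          (π x * (Real.sqrt (π x))⁻¹ * p x u * (Real.sqrt (π u))⁻¹) ^ 2 := by
        rw [mul_pow, mul_pow, mul_pow, inv_pow, inv_pow, Real.sq_sqrt hx.le, Real.sq_sqrt hu.le]
        field_simp
      rw [e', Real.sqrt_sq]
      have := hp_nonneg x u
      positivity
    · rw [indicator_of_notMem hz]
      apply tendsto_const_nhds.congr'
      filter_upwards with K
      have : g K x = 0 ∨ g K u = 0 := by
        by_contra! h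
        apply hz
        constructor
        · by_contra h'
          exact h.1 (hgA K x fun hh => h' hh.1.1)
        · by_contra h'
          exact h.2 (hgA K u fun hh => h' hh.1.1)
      rcases this with h | h <;> simp [h]
  · intro K
    rw [← ofReal_integral_eq_lintegral_ofReal (hI K)]
    · apply ENNReal.ofReal_le_ofReal
      rw [integral_prod _ (hI K)]
      have e : ∀ x, ∫ u, π x * g K x * p x u * g K u = π x * (g K x * Pop p (g K) x) := by
        intro x
        simp only [mul_assoc]
        rw [integral_const_mul, integral_const_mul]; rfl
      simp only [e]
      have := mul_le_mul_of_nonneg_left (hg2 K) hr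
      linarith [hcore K, hg1 K]
    · refine Eventually.of_forall fun z => ?_
      have := hp_nonneg z.1 z.2
      have := (hπ_pos z.1).le
      have := hgn K z.1
      have := hgn K z.2
      simp only [Pi.zero_apply]
      positivity

lemma partD {p : ℝ → ℝ → ℝ} {π q : ℝ → ℝ} (hp_meas : Measurable (Function.uncurry p))
    (hp_nonneg : ∀ x u, 0 ≤ p x u) (hp_prob : ∀ x, ∫ u, p x u = 1)
    (hπ : Integrable π) (hπ_pos : ∀ x, 0 < π x) (hπ_prob : ∫ x, π x = 1)
    (hrev : ∀ x u, π x * p x u = π u * p u x)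
    (hq_pos : ∀ z, 0 < q z)
    (hq_sym : ∀ z, q (-z) = q z)
    (hrw : ∀ z : ℝ, Tendsto (fun x => p x (x + z)) (cocompact ℝ) (nhds (q z)))
    (r : ℝ) (hr : 0 ≤ r) (M : ℝ → ℝ)
    (hM : ∀ x₀ : ℝ, ∀ n : ℕ, 1 ≤ n → (∫ u, |iterDens p n x₀ u - π u|) ≤ M x₀ * r ^ n)
    (L : ℝ) (hL : 0 ≤ L) :
    ∫⁻ z, (Icc 0 L ×ˢ Icc 0 L).indicator
      (fun z : ℝ × ℝ => ENNReal.ofReal (q (z.2 - z.1))) z ∂(volume.prod volume)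
      ≤ ENNReal.ofReal (r * L) := by
  have hk : Measurable (fun z : ℝ × ℝ => ENNReal.ofReal (Real.sqrt (p z.1 z.2 * p z.2 z.1))) := by
    have h1 : Measurable (fun z : ℝ × ℝ => p z.1 z.2) := hp_meas
    have h2 : Measurable (fun z : ℝ × ℝ => p z.2 z.1) := hp_meas.comp measurable_swap
    exact (Measurable.sqrt (h1.mul h2)).ennreal_ofReal
  refine fatou_aux (F := fun n z => (Icc 0 L ×ˢ Icc 0 L).indicator
      (fun z : ℝ × ℝ => ENNReal.ofReal (Real.sqrt (p (n + z.1) (n + z.2) * p (n + z.2) (n + z.1)))) z)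
    (C := fun n => ENNReal.ofReal (r * L + L * ∫ x in Icc (n:ℝ) (n + L), π x)) ?_ ?_ ?_ ?_
  · intro n
    apply Measurable.aemeasurable
    apply Measurable.indicator _ (measurableSet_Icc.prod measurableSet_Icc)
    exact hk.comp (by fun_prop : Measurable fun z : ℝ × ℝ => ((n:ℝ) + z.1, (n:ℝ) + z.2))
  · refine Eventually.of_forall fun z => ?_
    by_cases hz : z ∈ Icc 0 L ×ˢ Icc 0 L
    · simp only [indicator_of_mem hz]
      have lim : ∀ s t : ℝ, Tendsto (fun n : ℕ => p (n + s) (n + t)) atTop (nhds (q (t - s))) := by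
        intro s t
        have h1 : Tendsto (fun n : ℕ => (n:ℝ) + s) atTop (cocompact ℝ) :=
          (tendsto_atTop_add_const_right _ s tendsto_natCast_atTop_atTop).mono_right
            atTop_le_cocompact
        refine ((hrw (t - s)).comp h1).congr fun n => ?_
        simp only [Function.comp]
        congr 1; ring
      have h1 := ((lim z.1 z.2).mul (lim z.2 z.1)).sqrt
      have e : Real.sqrt (q (z.2 - z.1) * q (z.1 - z.2)) = q (z.2 - z.1) := by
        rw [← hq_sym (z.1 - z.2), neg_sub, Real.sqrt_mul_self (hq_pos _).le]
      rw [e] at h1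
      exact ENNReal.tendsto_ofReal h1
    · simp only [indicator_of_notMem hz]
      exact tendsto_const_nhds
  · intro n
    have h := partC hp_meas hp_nonneg hp_prob hπ hπ_pos hπ_prob hrev r hr M hM
      (Icc (n:ℝ) (n + L)) measurableSet_Icc L hL (by simp)
    rw [← lintegral_add_left_eq_self _ ((n:ℝ), (n:ℝ))] at h
    refine le_of_eq_of_le ?_ h
    congr 1; funext z
    obtain ⟨s, t⟩ := z
    have hiff : ((n:ℝ), (n:ℝ)) + (s, t) ∈ Icc (n:ℝ) (n + L) ×ˢ Icc (n:ℝ) (n + L) ↔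
        (s, t) ∈ Icc 0 L ×ˢ Icc 0 L := by
      simp [mem_prod]
    by_cases hz : (s, t) ∈ Icc 0 L ×ˢ Icc 0 L
    · rw [indicator_of_mem hz, indicator_of_mem (hiff.2 hz)]; rfl
    · rw [indicator_of_notMem hz, indicator_of_notMem (fun h => hz (hiff.1 h))]
  · have h : Tendsto (fun n : ℕ => ∫ x in Icc (n:ℝ) (n + L), π x) atTop (nhds 0) := by
      have e : ∀ n : ℕ, ∫ x in Icc (n:ℝ) (n + L), π x =
          ∫ x, (Icc (n:ℝ) (n + L)).indicator π x := fun n =>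
        (integral_indicator measurableSet_Icc).symm
      simp only [e]
      have := tendsto_integral_of_dominated_convergence
        (F := fun (n : ℕ) x => (Icc (n:ℝ) (n + L)).indicator π x) (f := fun _ => (0:ℝ))
        (μ := volume) π
        (fun n => hπ.aestronglyMeasurable.indicator measurableSet_Icc) hπ
        (fun n => Eventually.of_forall fun x => by
          by_cases hx : x ∈ Icc (n:ℝ) (n + L)
          · rw [indicator_of_mem hx, Real.norm_eq_abs, abs_of_pos (hπ_pos x)]
          · rw [indicator_of_notMem hx, norm_zero]; exact (hπ_pos x).le)
        (Eventually.of_forall fun x => by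
          apply tendsto_const_nhds.congr'
          filter_upwards [tendsto_natCast_atTop_atTop.eventually_gt_atTop x] with n hn
          rw [indicator_of_notMem]
          exact fun h => absurd h.1 (not_le.2 hn))
      simpa using this
    have := ENNReal.tendsto_ofReal ((h.const_mul L).const_add (r * L))
    simpa using this

lemma partE {q : ℝ → ℝ} (hq_cont : Continuous q) (hq_pos : ∀ z, 0 < q z)
    (hq_prob : ∫ z, q z = 1) (r : ℝ) (hr : 0 ≤ r)
    (h : ∀ L : ℝ, 0 ≤ L → ∫⁻ z, (Icc 0 L ×ˢ Icc 0 L).indicator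
      (fun z : ℝ × ℝ => ENNReal.ofReal (q (z.2 - z.1))) z ∂(volume.prod volume)
      ≤ ENNReal.ofReal (r * L)) : 1 ≤ r := by
  have hqm : Measurable q := hq_cont.measurable
  have hqi : Integrable q := by
    by_contra h
    rw [integral_undef h] at hq_prob
    norm_num at hq_prob
  have hR : ∀ R : ℕ, ∫⁻ z, (Icc (-(R:ℝ)) R).indicator (fun z => ENNReal.ofReal (q z)) z
      ≤ ENNReal.ofReal r := by
    intro R
    set i := ∫ z in Icc (-(R:ℝ)) R, q z with hi
    have hi0 : 0 ≤ i := setIntegral_nonneg measurableSet_Icc fun x _ => (hq_pos x).le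
    have e : ∫⁻ z, (Icc (-(R:ℝ)) R).indicator (fun z => ENNReal.ofReal (q z)) z =
        ENNReal.ofReal i := by
      rw [lintegral_indicator measurableSet_Icc, hi,
        ofReal_integral_eq_lintegral_ofReal hqi.integrableOn
          (Eventually.of_forall fun x => (hq_pos x).le)]
    rw [e]
    apply ENNReal.ofReal_le_ofReal
    have key : ∀ L : ℝ, 2 * R ≤ L → i * (L - 2 * R) ≤ r * L := by
      intro L hL
      have hR0 : (0:ℝ) ≤ R := by positivity
      have hL0 : 0 ≤ L := by linarith
      have h1 := h L hL0
      rw [lintegral_prod _ (by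
        apply Measurable.aemeasurable
        apply Measurable.indicator _ (measurableSet_Icc.prod measurableSet_Icc)
        fun_prop)] at h1
      have h2 : ∫⁻ s, (Icc (R:ℝ) (L - R)).indicator (fun _ => ENNReal.ofReal i) s ≤
          ENNReal.ofReal (r * L) := by
        refine le_trans (lintegral_mono fun s => ?_) h1
        by_cases hs : s ∈ Icc (R:ℝ) (L - R)
        · simp only [indicator_of_mem hs]
          rw [← e, ← lintegral_add_left_eq_self (fun t => (Icc 0 L ×ˢ Icc 0 L).indicator
            (fun z : ℝ × ℝ => ENNReal.ofReal (q (z.2 - z.1))) (s, t)) s]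
          refine lintegral_mono fun t => ?_
          by_cases ht : t ∈ Icc (-(R:ℝ)) R
          · have hm : (s, s + t) ∈ Icc 0 L ×ˢ Icc 0 L := by
              obtain ⟨a, b⟩ := hs
              obtain ⟨c, d⟩ := ht
              refine ⟨⟨?_, ?_⟩, ⟨?_, ?_⟩⟩ <;> simp only <;> linarith
            simp only [indicator_of_mem hm, indicator_of_mem ht]
            simp
          · simp only [indicator_of_notMem ht]; exact zero_le
        · simp only [indicator_of_notMem hs]; exact zero_le
      rw [lintegral_indicator measurableSet_Icc, lintegral_const, Measure.restrict_apply_univ,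
        Real.volume_Icc, ← ENNReal.ofReal_mul hi0,
        ENNReal.ofReal_le_ofReal_iff (by positivity)] at h2
      linarith
    by_contra! hlt
    have h0 : 0 < i - r := by linarith
    have := key (2 * R + (2 * R * r + 1) / (i - r)) (by
      have : 0 ≤ (2 * R * r + 1) / (i - r) := by positivity
      linarith)
    have e2 : (i - r) * ((2 * R * r + 1) / (i - r)) = 2 * R * r + 1 := by field_simp
    nlinarith
  have hfin : ∫⁻ z, ENNReal.ofReal (q z) ≤ ENNReal.ofReal r := by
    refine fatou_aux (fun R => ((hqm.ennreal_ofReal).indicator measurableSet_Icc).aemeasurable) ?_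
      hR tendsto_const_nhds
    refine Eventually.of_forall fun z => ?_
    apply tendsto_const_nhds.congr'
    filter_upwards [tendsto_natCast_atTop_atTop.eventually_ge_atTop |z|] with n hn
    rw [indicator_of_mem]
    exact abs_le.1 hn
  rw [← ofReal_integral_eq_lintegral_ofReal hqi (Eventually.of_forall fun x => (hq_pos x).le),
    hq_prob, ENNReal.ofReal_le_ofReal_iff hr] at hfin
  exact hfin

/-- a reversible, Π-irreducible Markov chain on `ℝ` whose transition
density is random-walk-like in the tails is not geometrically ergodic. -/
theorem random_walk_like_implies_not_geometrically_ergodic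
    (p : ℝ → ℝ → ℝ) (π : ℝ → ℝ) (q : ℝ → ℝ)
    (hp_meas : Measurable (Function.uncurry p))
    (hp_nonneg : ∀ x u, 0 ≤ p x u)
    (hp_prob : ∀ x, ∫ u, p x u = 1)
    (hπ_pos : ∀ x, 0 < π x) (hπ_prob : ∫ x, π x = 1)
    (hrev : ∀ x u, π x * p x u = π u * p u x)
    (hirr : ∀ x : ℝ, ∀ A : Set ℝ, MeasurableSet A → (0 < ∫ u in A, π u) →
      ∃ n : ℕ, 1 ≤ n ∧ 0 < ∫ u in A, iterDens p n x u)
    (hq_cont : Continuous q) (hq_pos : ∀ z, 0 < q z)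
    (hq_sym : ∀ z, q (-z) = q z) (hq_prob : ∫ z, q z = 1)
    (hrw : ∀ z : ℝ, Tendsto (fun x => p x (x + z)) (cocompact ℝ) (nhds (q z))) :
    ¬ ∃ r : ℝ, 0 ≤ r ∧ r < 1 ∧ ∃ M : ℝ → ℝ, (∀ x, 0 ≤ M x) ∧
      ∀ x₀ : ℝ, ∀ n : ℕ, 1 ≤ n →
        (∫ u, |iterDens p n x₀ u - π u|) ≤ M x₀ * r ^ n := by
  rintro ⟨r, hr, hr1, M, -, hM⟩
  have hπ : Integrable π := by
    by_contra h
    rw [integral_undef h] at hπ_prob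
    norm_num at hπ_prob
  have := partE hq_cont hq_pos hq_prob r hr fun L hL =>
    partD hp_meas hp_nonneg hp_prob hπ hπ_pos hπ_prob hrev hq_pos hq_sym hrw r hr M hM L hL
  linarith
end
end

section
/- Let p : ℝ × ℝ → [0, ∞) be a measurable transition density and π an everywhere positive probability density on ℝ satisfying detailed balance π(x)·p(x, u) = π(u)·p(u, x) for all x, u, and suppose for every z ∈ ℝ, p(x, x + z) → q(z) as |x| → ∞, where q is a continuous, everywhere positive probability density symmetric about 0. Then for every z > 0 and every δ > 0 there exists k > 0 such that: (i) for all x > k, π(x + z) ≥ (1 + δ)^{−1} π(x); and consequently (ii) ∫_{k+z}^∞ π(u) du ≥ (1 + δ)^{−1} ∫_k^∞ π(u) du. -/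
open MeasureTheory Filter Set

/-- for a reversible chain whose transition density is random-walk-like in
the tails, the stationary density satisfies `π(x + z) ≥ (1 + δ)⁻¹ π(x)` far enough in the
right tail, and consequently the tail probabilities satisfy the corresponding bound. -/
theorem random_walk_like_tail_density_bound (p : ℝ → ℝ → ℝ) (π : ℝ → ℝ) (q : ℝ → ℝ)
    (hp_meas : Measurable (Function.uncurry p))
    (hp_nonneg : ∀ x u, 0 ≤ p x u)
    (hp_prob : ∀ x, ∫ u, p x u = 1)
    (hπ_pos : ∀ x, 0 < π x) (hπ_prob : ∫ x, π x = 1)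
    (hrev : ∀ x u, π x * p x u = π u * p u x)
    (hq_cont : Continuous q) (hq_pos : ∀ z, 0 < q z)
    (hq_sym : ∀ z, q (-z) = q z) (hq_prob : ∫ z, q z = 1)
    (hrw : ∀ z : ℝ, Tendsto (fun x => p x (x + z)) (cocompact ℝ) (nhds (q z))) :
    ∀ z : ℝ, 0 < z → ∀ δ : ℝ, 0 < δ →
      ∃ k > (0 : ℝ),
        (∀ x : ℝ, k < x → (1 + δ)⁻¹ * π x ≤ π (x + z)) ∧
        (1 + δ)⁻¹ * (∫ u in Ici k, π u) ≤ ∫ u in Ici (k + z), π u := by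
  intro z hz δ hδ
  have hπi : Integrable π := by
    by_contra h
    rw [integral_undef h] at hπ_prob
    exact zero_ne_one hπ_prob
  have hle : (atTop : Filter ℝ) ≤ cocompact ℝ := atTop_le_cocompact
  have h1 : Tendsto (fun x => p x (x + z)) atTop (nhds (q z)) := (hrw z).mono_left hle
  have h2 : Tendsto (fun x => p (x + z) x) atTop (nhds (q z)) := by
    have h := ((hrw (-z)).mono_left hle).comp (tendsto_atTop_add_const_right atTop z tendsto_id)
    rw [hq_sym] at h
    refine h.congr fun x => ?_
    simp
  have hq := hq_pos z
  have hc : (1 + δ)⁻¹ < 1 := inv_lt_one_of_one_lt₀ (by linarith)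
  have hc0 : 0 < (1 + δ)⁻¹ := by positivity
  have h3 : ∀ᶠ x in atTop, (1 + δ)⁻¹ * p (x + z) x < p x (x + z) :=
    (h2.const_mul _).eventually_lt h1 (by nlinarith)
  have h4 : ∀ᶠ x in atTop, 0 < p (x + z) x := h2.eventually (lt_mem_nhds hq)
  obtain ⟨K, hK⟩ := eventually_atTop.1 (h3.and h4)
  have key : ∀ x : ℝ, max K 1 < x → (1 + δ)⁻¹ * π x ≤ π (x + z) := by
    intro x hx
    obtain ⟨ha, hb⟩ := hK x ((le_max_left _ _).trans hx.le)
    refine le_of_mul_le_mul_right ?_ hb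
    rw [← hrev x (x + z)]
    have := mul_le_mul_of_nonneg_left ha.le (hπ_pos x).le
    linarith
  refine ⟨max K 1, lt_of_lt_of_le one_pos (le_max_right _ _), key, ?_⟩
  set k := max K 1
  rw [integral_Ici_eq_integral_Ioi, integral_Ici_eq_integral_Ioi]
  have hsh : ∫ u in Ioi (k + z), π u = ∫ u in Ioi k, π (u + z) := by
    have h := (measurePreserving_add_right volume z).setIntegral_preimage_emb
      (measurableEmbedding_addRight z) π (Ioi (k + z))
    rw [← h]
    congr 2
    ext u
    simp
  rw [hsh, ← integral_const_mul]
  exact setIntegral_mono_on (hπi.const_mul _).integrableOn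
    (hπi.comp_add_right z).integrableOn measurableSet_Ioi key
end

section
/- In the Cauchy–Cauchy model, where f₁(t) = f₂(t) = 1/(π(1 + t²)) and y ∈ ℝ is fixed, the centred parametrisation is partially tight in parameter: for every k > 0, liminf_{|θ| → ∞} (1/c_θ) ∫_{y−k}^{y+k} f_θ(x) dx > 0, where f_θ(x) = f₁(y − x)·f₂(x − θ) and c_θ = ∫_ℝ f_θ(x) dx. In the course of the proof one has, for θ > y, the normalising-constant bound c_θ ≤ 4/(π(1 + (y − θ)²)). -/
open MeasureTheory Filter Set

noncomputable section

/-- Standard Cauchy density. -/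
def cauchyD (t : ℝ) : ℝ := 1 / (Real.pi * (1 + t ^ 2))

lemma cc_dpos (t : ℝ) : 0 < cauchyD t := by
  unfold cauchyD; have := Real.pi_pos; positivity

lemma cc_cont (y θ : ℝ) : Continuous (fjoint cauchyD cauchyD y θ) := by
  have h : Continuous cauchyD := by
    unfold cauchyD
    refine continuous_const.div (by fun_prop) (fun t => ?_)
    have := Real.pi_pos
    positivity
  unfold fjoint
  exact (h.comp (by fun_prop)).mul (h.comp (by fun_prop))

lemma cc_pos (y θ x : ℝ) : 0 < fjoint cauchyD cauchyD y θ x :=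
  mul_pos (cc_dpos _) (cc_dpos _)

/-- dominating function -/
def ccg (y θ x : ℝ) : ℝ :=
  2 / (Real.pi ^ 2 * (1 + (y - θ) ^ 2)) * ((1 + (x - y) ^ 2)⁻¹ + (1 + (x - θ) ^ 2)⁻¹)

lemma cc_le (y θ x : ℝ) : fjoint cauchyD cauchyD y θ x ≤ ccg y θ x := by
  have hp := Real.pi_pos
  unfold fjoint cauchyD ccg
  have e1 : 1 / (Real.pi * (1 + (y - x) ^ 2)) * (1 / (Real.pi * (1 + (x - θ) ^ 2)))
      = 1 / (Real.pi ^ 2 * ((1 + (x - y) ^ 2) * (1 + (x - θ) ^ 2))) := by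
    rw [show (y - x) ^ 2 = (x - y) ^ 2 by ring]
    field_simp
  have e2 : 2 / (Real.pi ^ 2 * (1 + (y - θ) ^ 2)) * ((1 + (x - y) ^ 2)⁻¹ + (1 + (x - θ) ^ 2)⁻¹)
      = (2 * ((1 + (x - y) ^ 2) + (1 + (x - θ) ^ 2)) / (1 + (y - θ) ^ 2)) *
        (1 / (Real.pi ^ 2 * ((1 + (x - y) ^ 2) * (1 + (x - θ) ^ 2)))) := by
    field_simp
    ring
  rw [e1, e2]
  apply le_mul_of_one_le_left (by positivity)
  rw [le_div_iff₀ (by positivity)]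
  nlinarith [sq_nonneg ((x - y) + (x - θ))]

lemma cc_gint (y θ : ℝ) : Integrable (ccg y θ) := by
  unfold ccg
  exact ((integrable_inv_one_add_sq.comp_sub_right y).add
    (integrable_inv_one_add_sq.comp_sub_right θ)).const_mul _

lemma cc_int (y θ : ℝ) : Integrable (fjoint cauchyD cauchyD y θ) := by
  refine (cc_gint y θ).mono' (cc_cont y θ).aestronglyMeasurable (ae_of_all _ fun x => ?_)
  rw [Real.norm_of_nonneg (cc_pos y θ x).le]
  exact cc_le y θ x

lemma cc_cnorm_le (y θ : ℝ) :
    cnorm cauchyD cauchyD y θ ≤ 4 / (Real.pi * (1 + (y - θ) ^ 2)) := by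
  have hp := Real.pi_pos
  have h := integral_mono (cc_int y θ) (cc_gint y θ) (cc_le y θ)
  have h2 : ∫ x, ccg y θ x = 4 / (Real.pi * (1 + (y - θ) ^ 2)) := by
    unfold ccg
    rw [integral_const_mul, integral_add (integrable_inv_one_add_sq.comp_sub_right y)
      (integrable_inv_one_add_sq.comp_sub_right θ),
      integral_sub_right_eq_self (fun x : ℝ => (1 + x ^ 2)⁻¹) y,
      integral_sub_right_eq_self (fun x : ℝ => (1 + x ^ 2)⁻¹) θ, integral_univ_inv_one_add_sq]
    field_simp
    norm_num
  unfold cnorm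
  linarith

lemma cc_lower (y θ k : ℝ) (hk : 0 < k) :
    k * cauchyD k / (Real.pi * (1 + k ^ 2) * (1 + (y - θ) ^ 2)) ≤
      ∫ x in (y - k)..(y + k), fjoint cauchyD cauchyD y θ x := by
  have hp := Real.pi_pos
  have h := intervalIntegral.integral_mono_on (μ := volume) (a := y - k) (b := y + k)
    (f := fun _ => cauchyD k * (1 / (Real.pi * (2 * (1 + k ^ 2) * (1 + (y - θ) ^ 2)))))
    (g := fjoint cauchyD cauchyD y θ) (by linarith)
    intervalIntegrable_const ((cc_cont y θ).intervalIntegrable _ _) (fun x hx => by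
      have hxk : (y - x) ^ 2 ≤ k ^ 2 := by
        apply sq_le_sq'
        · linarith [hx.2]
        · linarith [hx.1]
      unfold fjoint
      apply mul_le_mul _ _ (by positivity) (cc_dpos _).le
      · unfold cauchyD
        gcongr
      · unfold cauchyD
        apply one_div_le_one_div_of_le (by positivity)
        gcongr
        nlinarith [sq_nonneg ((y - x) + (y - θ)), mul_nonneg (sq_nonneg k) (sq_nonneg (y - θ))])
  rw [intervalIntegral.integral_const] at h
  refine le_trans (le_of_eq ?_) h
  rw [smul_eq_mul]
  field_simp
  ring

lemma cc_upper (y θ k : ℝ) (hk : 0 < k) :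
    ∫ x in (y - k)..(y + k), fjoint cauchyD cauchyD y θ x ≤ cnorm cauchyD cauchyD y θ := by
  rw [intervalIntegral.integral_of_le (by linarith)]
  exact setIntegral_le_integral (cc_int y θ) (ae_of_all _ fun x => (cc_pos y θ x).le)

/-- in the Cauchy–Cauchy model the centred parametrisation is PTIP: for
every `k > 0` the posterior mass of `[y - k, y + k]` has a strictly positive liminf as
`|θ| → ∞`; moreover, for `θ > y`, `c_θ ≤ 4 / (π (1 + (y - θ)²))`. -/
theorem cauchy_cauchy_ptip (y : ℝ) :
    (∀ k : ℝ, 0 < k →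
      0 < liminf (fun θ =>
            (1 / cnorm cauchyD cauchyD y θ) * ∫ x in (y - k)..(y + k), fjoint cauchyD cauchyD y θ x)
          (cocompact ℝ)) ∧
    (∀ θ : ℝ, y < θ → cnorm cauchyD cauchyD y θ ≤ 4 / (Real.pi * (1 + (y - θ) ^ 2))) := by
  have hp := Real.pi_pos
  refine ⟨fun k hk => ?_, fun θ _ => cc_cnorm_le y θ⟩
  have hd := cc_dpos k
  have hlpos : ∀ θ, 0 < k * cauchyD k / (Real.pi * (1 + k ^ 2) * (1 + (y - θ) ^ 2)) :=
    fun θ => by positivity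
  have hc : ∀ θ, 0 < cnorm cauchyD cauchyD y θ := fun θ =>
    (hlpos θ).trans_le ((cc_lower y θ k hk).trans (cc_upper y θ k hk))
  have hm : 0 < k * cauchyD k / (4 * (1 + k ^ 2)) := by positivity
  refine lt_of_lt_of_le hm (le_liminf_of_le ?_ (Eventually.of_forall fun θ => ?_))
  · refine IsBoundedUnder.isCoboundedUnder_ge ⟨1, ?_⟩
    rw [eventually_map]
    refine Eventually.of_forall fun θ => ?_
    rw [one_div, inv_mul_eq_div]
    exact (div_le_one (hc θ)).2 (cc_upper y θ k hk)
  · rw [one_div, inv_mul_eq_div, le_div_iff₀ (hc θ)]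
    refine le_trans (mul_le_mul_of_nonneg_left (cc_cnorm_le y θ) hm.le) ?_
    refine le_trans (le_of_eq ?_) (cc_lower y θ k hk)
    field_simp
end
end

section
/- Let f₂(t) = 1/(π(1 + t²)) be the standard Cauchy density and let f₁ be a continuous, bounded, everywhere positive probability density on ℝ, symmetric about 0, with finite second moment ∫_ℝ u² f₁(u) du < ∞. Fix y ∈ ℝ and set f_θ(x) = f₁(y − x)·f₂(x − θ), c_θ = ∫_ℝ f_θ(x) dx. Then for every x ∈ ℝ, lim_{|θ| → ∞} c_θ / f₂(x − θ) = 1, and consequently the conditional posterior density of X given Θ = θ converges pointwise to the likelihood density: f_θ(x)/c_θ → f₁(y − x) as |θ| → ∞ (so the model is robust in parameter, RIP). -/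
open MeasureTheory Filter

noncomputable section

theorem aux_ratio (x t : ℝ) :
    Tendsto (fun θ : ℝ => cauchyD (t - θ) / cauchyD (x - θ)) (cocompact ℝ) (nhds 1) := by
  have hs : Tendsto (fun θ : ℝ => t - θ) (cocompact ℝ) (cocompact ℝ) :=
    (Homeomorph.subLeft t).isClosedEmbedding.tendsto_cocompact
  have h1 : Tendsto (fun s : ℝ => s⁻¹) (cocompact ℝ) (nhds 0) := by
    rw [← Metric.cobounded_eq_cocompact]
    exact tendsto_inv₀_cobounded
  have h2 : Tendsto (fun s : ℝ => (1 + s ^ 2)⁻¹) (cocompact ℝ) (nhds 0) := by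
    apply Tendsto.inv_tendsto_atTop
    apply tendsto_atTop_add_const_left
    have h : Tendsto (fun s : ℝ => ‖s‖ ^ 2) (cocompact ℝ) atTop :=
      (tendsto_pow_atTop (two_ne_zero)).comp (tendsto_norm_cocompact_atTop (E := ℝ))
    simpa using h
  have h3 : Tendsto (fun s : ℝ => 1 + (x - t) ^ 2 * (1 + s ^ 2)⁻¹
      + 2 * (x - t) * (s⁻¹ * (1 - (1 + s ^ 2)⁻¹))) (cocompact ℝ) (nhds 1) := by
    have := ((h2.const_mul ((x - t) ^ 2)).const_add 1).add
      ((h1.mul (h2.const_sub 1)).const_mul (2 * (x - t)))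
    simpa using this
  refine (h3.comp hs).congr fun θ => ?_
  simp only [Function.comp, cauchyD]
  obtain ⟨s, rfl⟩ : ∃ s, θ = t - s := ⟨t - θ, by ring⟩
  have e1 : t - (t - s) = s := by ring
  have e2 : x - (t - s) = (x - t) + s := by ring
  rw [e1, e2]
  generalize x - t = a
  have p1 : 1 + s ^ 2 ≠ 0 := by positivity
  have p2 : 1 + (a + s) ^ 2 ≠ 0 := by positivity
  have hpi := Real.pi_ne_zero
  rcases eq_or_ne s 0 with rfl | h0
  · field_simp
    simp
  · field_simp
    ring

theorem aux_bound (x t θ : ℝ) :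
    |cauchyD (t - θ) / cauchyD (x - θ)| ≤ 2 * (1 + (x - t) ^ 2) := by
  have e : cauchyD (t - θ) / cauchyD (x - θ) = (1 + (x - θ) ^ 2) / (1 + (t - θ) ^ 2) := by
    have p1 : 1 + (t - θ) ^ 2 ≠ 0 := by positivity
    have p2 : 1 + (x - θ) ^ 2 ≠ 0 := by positivity
    have hpi := Real.pi_ne_zero
    unfold cauchyD
    field_simp
  rw [e, abs_of_nonneg (by positivity), div_le_iff₀ (by positivity)]
  nlinarith [sq_nonneg ((x - t) - (t - θ)), sq_nonneg ((x - t) * (t - θ))]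

/-- with standard Cauchy prior error `f₂` and a symmetric, continuous,
bounded, positive likelihood density `f₁` with finite second moment, the model is robust
in parameter (RIP): `c_θ / f₂(x - θ) → 1` and `π(x | θ) → f₁(y - x)` as `|θ| → ∞`. -/
theorem cauchy_prior_rip (f₁ : ℝ → ℝ) (y : ℝ)
    (hf₁c : Continuous f₁) (hf₁pos : ∀ t, 0 < f₁ t)
    (hf₁bdd : ∃ M, ∀ t, f₁ t ≤ M) (hf₁sym : ∀ t, f₁ (-t) = f₁ t)
    (hf₁prob : ∫ t, f₁ t = 1)
    (hf₁mom : Integrable (fun u => u ^ 2 * f₁ u)) :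
    ∀ x : ℝ,
      Tendsto (fun θ => cnorm f₁ cauchyD y θ / cauchyD (x - θ)) (cocompact ℝ) (nhds 1) ∧
      Tendsto (fun θ => fjoint f₁ cauchyD y θ x / cnorm f₁ cauchyD y θ) (cocompact ℝ)
        (nhds (f₁ (y - x))) := by
  intro x
  have hint : Integrable f₁ := by
    by_contra h
    rw [integral_undef h] at hf₁prob
    norm_num at hf₁prob
  have hne : ∀ t, cauchyD t ≠ 0 := fun t => by
    have := Real.pi_pos
    unfold cauchyD
    positivity
  have key : Tendsto (fun θ => cnorm f₁ cauchyD y θ / cauchyD (x - θ)) (cocompact ℝ)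
      (nhds 1) := by
    have e1 : (1 : ℝ) = ∫ t, f₁ (y - t) * 1 := by
      simp only [mul_one]
      rw [integral_sub_left_eq_self f₁ volume y, hf₁prob]
    have e2 : ∀ θ, cnorm f₁ cauchyD y θ / cauchyD (x - θ)
        = ∫ t, f₁ (y - t) * (cauchyD (t - θ) / cauchyD (x - θ)) := fun θ => by
      simp only [cnorm, fjoint]
      rw [← integral_div]
      simp only [mul_div_assoc]
    rw [e1]
    simp only [e2]
    have hb : Integrable (fun u => (2 + 4 * (x - y) ^ 2) * f₁ u + 4 * (u ^ 2 * f₁ u)) :=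
      (hint.const_mul _).add (hf₁mom.const_mul 4)
    have hb' := hb.comp_sub_left y
    haveI : (cocompact ℝ).IsCountablyGenerated := by
      rw [← Metric.cobounded_eq_cocompact, ← comap_norm_atTop]
      infer_instance
    refine tendsto_integral_filter_of_dominated_convergence _ ?_ ?_ hb' ?_
    · refine Eventually.of_forall fun θ => Measurable.aestronglyMeasurable ?_
      have := hf₁c.measurable
      unfold cauchyD
      fun_prop
    · refine Eventually.of_forall fun θ => Eventually.of_forall fun t => ?_
      rw [norm_mul, Real.norm_eq_abs, Real.norm_eq_abs, abs_of_pos (hf₁pos _)]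
      have h := mul_le_mul_of_nonneg_left (aux_bound x t θ) (hf₁pos (y - t)).le
      refine h.trans ?_
      have h2 : 2 * (1 + (x - t) ^ 2) ≤ (2 + 4 * (x - y) ^ 2) + 4 * (y - t) ^ 2 := by
        nlinarith [sq_nonneg ((x - y) - (y - t))]
      have := mul_le_mul_of_nonneg_left h2 (hf₁pos (y - t)).le
      linarith
    · exact Eventually.of_forall fun t => (aux_ratio x t).const_mul _
  refine ⟨key, ?_⟩
  have h := (key.inv₀ one_ne_zero).const_mul (f₁ (y - x))
  rw [inv_one, mul_one] at h
  refine h.congr fun θ => ?_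
  rw [inv_div, fjoint, mul_div_assoc]
end
end

section
/- In the exponential-power–exponential-power model, where fᵢ(t) = exp(−|t/σᵢ|^β)/Zᵢ for i = 1, 2 with β > 2, σ₁, σ₂ > 0 and Zᵢ normalising constants, set a = β/(β − 1) and ρ = σ₁^a/(σ₁^a + σ₂^a) (equivalently ρ/(1 − ρ) = (σ₁/σ₂)^a). Fix y ∈ ℝ. Then: (i) as |θ| → ∞ the conditional posterior of X given Θ = θ concentrates at ρθ + (1 − ρ)y, i.e. for every ε > 0, ∫_{{x : |x − ρθ − (1−ρ)y| > ε}} f_θ(x)/c_θ dx → 0; and (ii) for every ε > 0 there exists k > 0 such that for all |θ| > k, ∫_ℝ |x − y|·(f_θ(x)/c_θ) dx ≤ (1 + ε)·ρ·|θ − y|. Here f_θ(x) = f₁(y − x)·f₂(x − θ) and c_θ = ∫_ℝ f_θ(x) dx. -/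
open MeasureTheory Filter Set

noncomputable section

/-- Exponential-power density with scale `σ` and shape `β` (normalised). -/
def epD (σ β t : ℝ) : ℝ :=
  Real.exp (-(|t| / σ) ^ β) / ∫ u : ℝ, Real.exp (-(|u| / σ) ^ β)

lemma ep_lower (β a b : ℝ) (hβ : 2 < β) (ha : a ≠ 0) :
    |a| ^ β + β * (|a| ^ (β - 2) * a * b) + β / 2 * (|a| ^ (β - 2) * b ^ 2) ≤ |a + b| ^ β := by
  have h1 := one_add_mul_self_le_rpow_one_add (s := (1 + b / a) ^ 2 - 1) (p := β / 2)
    (by nlinarith [sq_nonneg (1 + b / a)]) (by linarith)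
  have hpos : 0 < |a| := abs_pos.mpr ha
  have h2 : (1 + ((1 + b / a) ^ 2 - 1)) ^ (β / 2) = |1 + b / a| ^ β := by
    rw [add_sub_cancel, ← sq_abs, ← Real.rpow_natCast, ← Real.rpow_mul (abs_nonneg _)]
    congr 1
    push_cast; ring
  rw [h2] at h1
  have h3 : |a + b| ^ β = |a| ^ β * |1 + b / a| ^ β := by
    rw [← Real.mul_rpow (abs_nonneg _) (abs_nonneg _), ← abs_mul]
    congr 2
    field_simp
  have h4 : |a| ^ β = |a| ^ (β - 2) * a ^ 2 := by
    rw [← sq_abs a, ← Real.rpow_natCast, ← Real.rpow_add hpos]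
    congr 1
    push_cast; ring
  rw [h3]
  refine le_trans (le_of_eq ?_) (mul_le_mul_of_nonneg_left h1 (Real.rpow_nonneg (abs_nonneg a) β))
  rw [h4]
  field_simp
  ring

lemma ep_lin (β σ p m s : ℝ) (hσ : 0 < σ) (hp : 0 < p) :
    |p * m / σ| ^ (β - 2) * (p * m / σ) * (s / σ)
      = p ^ (β - 1) / σ ^ β * (|m| ^ (β - 2) * m * s) := by
  have h1 : |p * m / σ| = p * |m| / σ := by
    rw [abs_div, abs_mul, abs_of_pos hσ, abs_of_pos hp]
  have h2 : p ^ (β - 1) = p ^ (β - 2) * p := by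
    rw [← Real.rpow_add_one hp.ne']; congr 1; ring
  have h3 : σ ^ β = σ ^ (β - 2) * σ ^ 2 := by
    rw [← Real.rpow_natCast, ← Real.rpow_add hσ]; congr 1; push_cast; ring
  have h4 : 0 < σ ^ (β - 2) := Real.rpow_pos_of_pos hσ _
  rw [h1, Real.div_rpow (by positivity) hσ.le, Real.mul_rpow hp.le (abs_nonneg _), h2, h3]
  field_simp

lemma ep_mid (β a b : ℝ) (hβ : 2 < β) :
    2 * |a + b| ^ β ≤ |a + 2 * b| ^ β + |a| ^ β := by
  have h := (convexOn_rpow (p := β) (by linarith)).2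
    (abs_nonneg (a + 2 * b)) (abs_nonneg a) (by norm_num : (0 : ℝ) ≤ 1 / 2)
    (by norm_num : (0 : ℝ) ≤ 1 / 2) (by norm_num)
  simp only [smul_eq_mul] at h
  have h2 : |a + b| ≤ 1 / 2 * |a + 2 * b| + 1 / 2 * |a| := by
    have := abs_add_le (a + 2 * b) a
    have h3 : |(a + 2 * b) + a| = 2 * |a + b| := by
      rw [show (a + 2 * b) + a = 2 * (a + b) by ring, abs_mul]; norm_num
    linarith
  have h3 := Real.rpow_le_rpow (abs_nonneg _) h2 (by linarith : 0 ≤ β)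
  linarith

lemma ep_key (F : ℝ → ℝ) (Q : ℝ) (hQ : 0 < Q) (h0 : ∀ s, 0 ≤ F s) (hm : Measurable F)
    (hF : ∀ s, F s ≤ F 0 * Real.exp (-Q * s ^ 2))
    (hd : ∀ v, F (2 * v) ≤ F v * Real.exp (-Q * v ^ 2)) :
    Integrable F ∧ Integrable (fun s => |s| * F s) ∧
    ∫ s, |s| * F s ≤ 4 / √Q * ∫ s, F s := by
  have hI : Integrable F := by
    refine ((integrable_exp_neg_mul_sq hQ).const_mul (F 0)).mono' hm.aestronglyMeasurable ?_
    refine Eventually.of_forall fun s => ?_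
    rw [Real.norm_of_nonneg (h0 s)]
    exact hF s
  have hI2 : Integrable (fun s => |s| * F s) := by
    refine ((integrable_mul_exp_neg_mul_sq hQ).norm.const_mul (F 0)).mono'
      (measurable_norm.mul hm).aestronglyMeasurable ?_
    refine Eventually.of_forall fun s => ?_
    rw [Real.norm_of_nonneg (mul_nonneg (abs_nonneg _) (h0 s)), norm_mul, Real.norm_eq_abs s,
      Real.norm_of_nonneg (Real.exp_nonneg _)]
    calc |s| * F s ≤ |s| * (F 0 * Real.exp (-Q * s ^ 2)) :=
          mul_le_mul_of_nonneg_left (hF s) (abs_nonneg _)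
      _ = _ := by ring
  refine ⟨hI, hI2, ?_⟩
  have hs : ∫ s, |s| * F s = 2 * ∫ v, |2 * v| * F (2 * v) := by
    have := Measure.integral_comp_mul_left (fun s => |s| * F s) (2 : ℝ)
    rw [this]
    simp
  rw [hs, ← integral_const_mul, ← integral_const_mul]
  have hI3 : Integrable (fun v => |2 * v| * F (2 * v)) :=
    hI2.comp_mul_left' (by norm_num : (2 : ℝ) ≠ 0)
  refine integral_mono (hI3.const_mul 2) (hI.const_mul _) fun v => ?_
  have hsq : 0 < √Q := Real.sqrt_pos.mpr hQ
  have hb : |v| * Real.exp (-Q * v ^ 2) ≤ 1 / √Q := by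
    have h1 : √Q * |v| ≤ Real.exp (Q * v ^ 2) := by
      have h2 := Real.add_one_le_exp (Q * v ^ 2)
      have h3 : (√Q * |v|) ^ 2 = Q * v ^ 2 := by rw [mul_pow, Real.sq_sqrt hQ.le, sq_abs]
      nlinarith [sq_nonneg (√Q * |v| - 1)]
    rw [le_div_iff₀ hsq, neg_mul, Real.exp_neg]
    have h5 := Real.exp_pos (Q * v ^ 2)
    rw [mul_right_comm, mul_comm |v|, ← div_eq_mul_inv, div_le_one h5]
    exact h1
  have h2v : |2 * v| = 2 * |v| := by rw [abs_mul]; norm_num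
  show 2 * (|2 * v| * F (2 * v)) ≤ 4 / √Q * F v
  rw [h2v]
  calc 2 * (2 * |v| * F (2 * v)) ≤ 2 * (2 * |v| * (F v * Real.exp (-Q * v ^ 2))) := by
        gcongr; exact hd v
    _ = 4 * (|v| * Real.exp (-Q * v ^ 2)) * F v := by ring
    _ ≤ 4 * (1 / √Q) * F v := by
        have := h0 v
        gcongr
    _ = _ := by ring

lemma ep_measurable (σ β : ℝ) : Measurable (epD σ β) := by
  unfold epD
  fun_prop

lemma ep_exp (σ₁ σ₂ β m p q T : ℝ) (hσ₁ : 0 < σ₁) (hσ₂ : 0 < σ₂) (hβ : 2 < β) (hm : m ≠ 0)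
    (hp : 0 < p) (hq : 0 < q)
    (h1 : p ^ (β - 1) / σ₁ ^ β = T) (h2 : q ^ (β - 1) / σ₂ ^ β = T) (s : ℝ) :
    |p * m / σ₁| ^ β + |q * -m / σ₂| ^ β
      + β / 2 * (p / σ₁) ^ (β - 2) / σ₁ ^ 2 * |m| ^ (β - 2) * s ^ 2
      ≤ |p * m / σ₁ + s / σ₁| ^ β + |q * -m / σ₂ + s / σ₂| ^ β := by
  have e1 := ep_lower β (p * m / σ₁) (s / σ₁) hβ (by positivity)
  have e2 := ep_lower β (q * -m / σ₂) (s / σ₂) hβ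
    (div_ne_zero (mul_ne_zero hq.ne' (neg_ne_zero.mpr hm)) hσ₂.ne')
  rw [ep_lin _ _ _ _ _ hσ₁ hp, h1] at e1
  rw [ep_lin _ _ _ _ _ hσ₂ hq, h2, abs_neg m] at e2
  have h3 : |p * m / σ₁| ^ (β - 2) = (p / σ₁) ^ (β - 2) * |m| ^ (β - 2) := by
    rw [← Real.mul_rpow (by positivity) (abs_nonneg _), abs_div, abs_mul, abs_of_pos hp,
      abs_of_pos hσ₁]
    congr 1; ring
  rw [h3] at e1
  have h4 : 0 ≤ β / 2 * (|q * -m / σ₂| ^ (β - 2) * (s / σ₂) ^ 2) := by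
    have : 0 ≤ β / 2 := by linarith
    positivity
  have h5 : β / 2 * ((p / σ₁) ^ (β - 2) * |m| ^ (β - 2) * (s / σ₁) ^ 2)
    = β / 2 * (p / σ₁) ^ (β - 2) / σ₁ ^ 2 * |m| ^ (β - 2) * s ^ 2 := by
    rw [div_pow]; ring
  rw [h5] at e1
  linarith

lemma ep_main (σ₁ σ₂ β y θ p T : ℝ) (hσ₁ : 0 < σ₁) (hσ₂ : 0 < σ₂) (hβ : 2 < β) (hm : θ - y ≠ 0)
    (hp : 0 < p) (hq : 0 < 1 - p)
    (h1 : p ^ (β - 1) / σ₁ ^ β = T) (h2 : (1 - p) ^ (β - 1) / σ₂ ^ β = T) :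
    Integrable (fjoint (epD σ₁ β) (epD σ₂ β) y θ) ∧
    Integrable (fun x => |x - (p * θ + (1 - p) * y)| * fjoint (epD σ₁ β) (epD σ₂ β) y θ x) ∧
    (∀ x, 0 ≤ fjoint (epD σ₁ β) (epD σ₂ β) y θ x) ∧
    ∫ x, |x - (p * θ + (1 - p) * y)| * fjoint (epD σ₁ β) (epD σ₂ β) y θ x ≤
      4 / √(β / 2 * (p / σ₁) ^ (β - 2) / σ₁ ^ 2 * |θ - y| ^ (β - 2)) *
        cnorm (epD σ₁ β) (epD σ₂ β) y θ := by
  set Q := β / 2 * (p / σ₁) ^ (β - 2) / σ₁ ^ 2 * |θ - y| ^ (β - 2) with hQdef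
  have hQ : 0 < Q := by
    have : 0 < |θ - y| := abs_pos.mpr hm
    have : 0 < β / 2 := by linarith
    positivity
  have hZ : ∀ σ, 0 ≤ ∫ u : ℝ, Real.exp (-(|u| / σ) ^ β) := fun σ =>
    integral_nonneg fun _ => (Real.exp_nonneg _)
  have hnn : ∀ x, 0 ≤ fjoint (epD σ₁ β) (epD σ₂ β) y θ x := fun x => by
    unfold fjoint epD
    have := hZ σ₁
    have := hZ σ₂
    positivity
  set μ := p * θ + (1 - p) * y with hμ
  set W : ℝ → ℝ := fun s => |p * (θ - y) / σ₁ + s / σ₁| ^ β + |(1 - p) * -(θ - y) / σ₂ + s / σ₂| ^ β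
    with hW
  obtain ⟨C, hC0, hC⟩ : ∃ C : ℝ, 0 ≤ C ∧ ∀ s, fjoint (epD σ₁ β) (epD σ₂ β) y θ (s + μ)
      = C * Real.exp (-W s) := by
    refine ⟨1 / ((∫ u : ℝ, Real.exp (-(|u| / σ₁) ^ β)) * ∫ u : ℝ, Real.exp (-(|u| / σ₂) ^ β)),
      one_div_nonneg.mpr (mul_nonneg (hZ _) (hZ _)), fun s => ?_⟩
    have a1 : |y - (s + μ)| / σ₁ = |p * (θ - y) / σ₁ + s / σ₁| := by
      rw [← add_div, abs_div, abs_of_pos hσ₁, ← abs_neg]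
      congr 2; rw [hμ]; ring
    have a2 : |s + μ - θ| / σ₂ = |(1 - p) * -(θ - y) / σ₂ + s / σ₂| := by
      rw [← add_div, abs_div, abs_of_pos hσ₂]
      congr 2; rw [hμ]; ring
    simp only [fjoint, epD]
    rw [a1, a2, hW]
    simp only [neg_add, Real.exp_add]
    rw [div_mul_div_comm]; ring
  have hWlow : ∀ s, W 0 + Q * s ^ 2 ≤ W s := fun s => by
    have := ep_exp σ₁ σ₂ β (θ - y) p (1 - p) T hσ₁ hσ₂ hβ hm hp hq h1 h2 s
    simpa [hW, hQdef] using this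
  have hWmid : ∀ s, 2 * W s ≤ W (2 * s) + W 0 := fun s => by
    have e1 := ep_mid β (p * (θ - y) / σ₁) (s / σ₁) hβ
    have e2 := ep_mid β ((1 - p) * -(θ - y) / σ₂) (s / σ₂) hβ
    rw [← mul_div_assoc] at e1 e2
    simp only [hW, zero_div, add_zero]
    linarith
  have hmeas : Measurable (fjoint (epD σ₁ β) (epD σ₂ β) y θ) := by
    have := ep_measurable σ₁ β
    have := ep_measurable σ₂ β
    unfold fjoint
    fun_prop
  obtain ⟨k1, k2, k3⟩ := ep_key (fun s => fjoint (epD σ₁ β) (epD σ₂ β) y θ (s + μ)) Q hQ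
    (fun s => hnn _) (hmeas.comp (measurable_id.add_const μ))
    (fun s => by
      simp only [hC]
      rw [mul_assoc, ← Real.exp_add]
      refine mul_le_mul_of_nonneg_left (Real.exp_le_exp.mpr ?_) hC0
      linarith [hWlow s])
    (fun s => by
      simp only [hC]
      rw [mul_assoc, ← Real.exp_add]
      refine mul_le_mul_of_nonneg_left (Real.exp_le_exp.mpr ?_) hC0
      linarith [hWlow s, hWmid s])
  have i1 := k1.comp_sub_right μ
  have i2 := k2.comp_sub_right μ
  simp only [sub_add_cancel] at i1 i2
  refine ⟨i1, i2, hnn, ?_⟩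
  have j1 := integral_add_right_eq_self (μ := volume)
    (fun x => |x - μ| * fjoint (epD σ₁ β) (epD σ₂ β) y θ x) μ
  have j2 := integral_add_right_eq_self (μ := volume) (fjoint (epD σ₁ β) (epD σ₂ β) y θ) μ
  simp only [add_sub_cancel_right] at j1
  rw [← j1, cnorm, ← j2]
  exact k3

/-- in the exponential-power–exponential-power model with shape `β > 2`,
setting `a = β/(β-1)` and `ρ = σ₁^a/(σ₁^a + σ₂^a)`, (i) the conditional posterior of `X`
given `Θ = θ` concentrates at `ρθ + (1 - ρ)y` as `|θ| → ∞`, and (ii) for every `ε > 0`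
there is `k > 0` with `E{|X - y| | Θ = θ} ≤ (1 + ε) ρ |θ - y|` for all `|θ| > k`. -/
theorem exponential_power_concentration (σ₁ σ₂ β y : ℝ)
    (hσ₁ : 0 < σ₁) (hσ₂ : 0 < σ₂) (hβ : 2 < β) :
    ∀ ρ : ℝ,
      ρ = σ₁ ^ (β / (β - 1)) / (σ₁ ^ (β / (β - 1)) + σ₂ ^ (β / (β - 1))) →
      (∀ ε : ℝ, 0 < ε →
        Tendsto (fun θ =>
            ∫ x in {x : ℝ | ε < |x - (ρ * θ + (1 - ρ) * y)|},
              fjoint (epD σ₁ β) (epD σ₂ β) y θ x / cnorm (epD σ₁ β) (epD σ₂ β) y θ)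
          (cocompact ℝ) (nhds 0)) ∧
      (∀ ε : ℝ, 0 < ε → ∃ k > (0 : ℝ), ∀ θ : ℝ, k < |θ| →
        (∫ x, |x - y| *
            (fjoint (epD σ₁ β) (epD σ₂ β) y θ x / cnorm (epD σ₁ β) (epD σ₂ β) y θ)) ≤
          (1 + ε) * ρ * |θ - y|) := by
  intro ρ hρ
  set D := σ₁ ^ (β / (β - 1)) + σ₂ ^ (β / (β - 1)) with hD
  have hs1 : 0 < σ₁ ^ (β / (β - 1)) := Real.rpow_pos_of_pos hσ₁ _
  have hs2 : 0 < σ₂ ^ (β / (β - 1)) := Real.rpow_pos_of_pos hσ₂ _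
  have hDpos : 0 < D := by positivity
  have hp : 0 < ρ := by rw [hρ]; positivity
  have hq' : 1 - ρ = σ₂ ^ (β / (β - 1)) / D := by
    rw [hρ]; field_simp; rw [hD]; ring
  have hq : 0 < 1 - ρ := by rw [hq']; positivity
  have hT : ∀ σ : ℝ, 0 < σ → (σ ^ (β / (β - 1)) / D) ^ (β - 1) / σ ^ β = (D ^ (β - 1))⁻¹ := by
    intro σ hσ
    have : 0 < σ ^ β := Real.rpow_pos_of_pos hσ _
    rw [Real.div_rpow (by positivity) hDpos.le, ← Real.rpow_mul hσ.le,
      div_mul_cancel₀ _ (by linarith : β - 1 ≠ 0)]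
    field_simp
  have h1 := hT σ₁ hσ₁
  have h2 := hT σ₂ hσ₂
  rw [← hρ] at h1
  rw [← hq'] at h2
  set K := β / 2 * (ρ / σ₁) ^ (β - 2) / σ₁ ^ 2 with hK
  have hKpos : 0 < K := by
    have : 0 < β / 2 := by linarith
    positivity
  have main := fun θ hm => ep_main σ₁ σ₂ β y θ ρ _ hσ₁ hσ₂ hβ hm hp hq h1 h2
  have habs : Tendsto (fun θ : ℝ => |θ - y|) (cocompact ℝ) atTop := by
    have h := tendsto_norm_cocompact_atTop (E := ℝ)
    refine tendsto_atTop_mono (f := fun θ : ℝ => ‖θ‖ + -|y|) (fun θ => ?_)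
      (tendsto_atTop_add_const_right _ _ h)
    have := abs_sub_abs_le_abs_sub θ y
    rw [Real.norm_eq_abs]; linarith
  have hB : Tendsto (fun θ : ℝ => 4 / √(K * |θ - y| ^ (β - 2))) (cocompact ℝ) (nhds 0) := by
    refine Tendsto.div_atTop tendsto_const_nhds ?_
    refine Real.tendsto_sqrt_atTop.comp ?_
    exact ((tendsto_rpow_atTop (by linarith : 0 < β - 2)).comp habs).const_mul_atTop hKpos
  have hne : ∀ᶠ θ : ℝ in cocompact ℝ, 1 < |θ - y| := habs.eventually_gt_atTop 1
  have hmom : ∀ θ : ℝ, θ - y ≠ 0 →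
      ∫ x, |x - (ρ * θ + (1 - ρ) * y)| *
        (fjoint (epD σ₁ β) (epD σ₂ β) y θ x / cnorm (epD σ₁ β) (epD σ₂ β) y θ)
        ≤ 4 / √(K * |θ - y| ^ (β - 2)) := by
    intro θ hm
    obtain ⟨_, _, m3, m4⟩ := main θ hm
    simp only [← mul_div_assoc]
    rw [integral_div]
    exact div_le_of_le_mul₀ (integral_nonneg m3) (by positivity) m4
  refine ⟨fun ε hε => ?_, fun ε hε => ?_⟩
  · have hB' := hB.div_const ε
    rw [zero_div] at hB'
    refine squeeze_zero' ?_ ?_ hB'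
    · filter_upwards [hne] with θ hθ
      have hm : θ - y ≠ 0 := abs_pos.mp (by linarith)
      obtain ⟨_, _, m3, _⟩ := main θ hm
      exact integral_nonneg fun x => div_nonneg (m3 x) (integral_nonneg m3)
    · filter_upwards [hne] with θ hθ
      have hm : θ - y ≠ 0 := abs_pos.mp (by linarith)
      obtain ⟨m1, m2, m3, _⟩ := main θ hm
      have hc : 0 ≤ cnorm (epD σ₁ β) (epD σ₂ β) y θ := integral_nonneg m3
      have hS : MeasurableSet {x : ℝ | ε < |x - (ρ * θ + (1 - ρ) * y)|} :=
        measurableSet_lt measurable_const (by fun_prop)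
      have hI : Integrable (fun x => |x - (ρ * θ + (1 - ρ) * y)| *
        (fjoint (epD σ₁ β) (epD σ₂ β) y θ x / cnorm (epD σ₁ β) (epD σ₂ β) y θ)) := by
        simp only [← mul_div_assoc]
        exact m2.div_const _
      rw [le_div_iff₀ hε, ← integral_mul_const]
      refine le_trans ?_ (hmom θ hm)
      refine le_trans ?_ (setIntegral_le_integral (s := {x : ℝ | ε < |x - (ρ * θ + (1 - ρ) * y)|}) hI
        (Eventually.of_forall fun x => mul_nonneg (abs_nonneg _) (div_nonneg (m3 x) hc)))
      refine setIntegral_mono_on ((m1.div_const _).mul_const ε).integrableOn hI.integrableOn hS ?_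
      intro x hx
      rw [mul_comm]
      exact mul_le_mul_of_nonneg_right (le_of_lt hx) (div_nonneg (m3 x) hc)
  · have hev : ∀ᶠ θ : ℝ in cocompact ℝ, 4 / √(K * |θ - y| ^ (β - 2)) < ε * ρ :=
      hB.eventually_lt_const (by positivity)
    have hall := hev.and hne
    rw [← Metric.cobounded_eq_cocompact, ← comap_norm_atTop, eventually_comap] at hall
    obtain ⟨k, hk⟩ := eventually_atTop.mp hall
    refine ⟨max k 1, by positivity, fun θ hθ => ?_⟩
    obtain ⟨hb, h1'⟩ := hk ‖θ‖ ((le_max_left k 1).trans hθ.le) θ rfl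
    have hm : θ - y ≠ 0 := abs_pos.mp (by linarith)
    obtain ⟨m1, m2, m3, _⟩ := main θ hm
    have hc : 0 ≤ cnorm (epD σ₁ β) (epD σ₂ β) y θ := integral_nonneg m3
    have hmm := hmom θ hm
    set P : ℝ → ℝ := fun x =>
      fjoint (epD σ₁ β) (epD σ₂ β) y θ x / cnorm (epD σ₁ β) (epD σ₂ β) y θ with hP
    have hP0 : ∀ x, 0 ≤ P x := fun x => div_nonneg (m3 x) hc
    have hPI : Integrable P := m1.div_const _
    have hI : Integrable (fun x => |x - (ρ * θ + (1 - ρ) * y)| * P x) := by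
      simp only [hP, ← mul_div_assoc]
      exact m2.div_const _
    have hP1 : ∫ x, P x ≤ 1 := by
      rw [hP, integral_div]
      exact div_self_le_one _
    have hle : ∀ x, |x - y| * P x ≤
        |x - (ρ * θ + (1 - ρ) * y)| * P x + ρ * |θ - y| * P x := by
      intro x
      rw [← add_mul]
      refine mul_le_mul_of_nonneg_right ?_ (hP0 x)
      have := abs_add_le (x - (ρ * θ + (1 - ρ) * y)) (ρ * (θ - y))
      rw [abs_mul, abs_of_pos hp] at this
      refine le_trans (le_of_eq ?_) this
      congr 1; ring
    calc ∫ x, |x - y| * P x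
        ≤ ∫ x, (|x - (ρ * θ + (1 - ρ) * y)| * P x + ρ * |θ - y| * P x) :=
          integral_mono_of_nonneg
            (Eventually.of_forall fun x => mul_nonneg (abs_nonneg _) (hP0 x))
            (hI.add (hPI.const_mul _)) (Eventually.of_forall hle)
      _ = (∫ x, |x - (ρ * θ + (1 - ρ) * y)| * P x) + ρ * |θ - y| * ∫ x, P x := by
          rw [integral_add hI (hPI.const_mul _), integral_const_mul]
      _ ≤ ε * ρ * |θ - y| + ρ * |θ - y| * 1 := by
          refine add_le_add ?_ (mul_le_mul_of_nonneg_left hP1 (by positivity))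
          refine (hmm.trans hb.le).trans ?_
          exact le_mul_of_one_le_right (by positivity) h1'.le
      _ = (1 + ε) * ρ * |θ - y| := by ring
end
end
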